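/- Let (K, v_K) be a field with a non-trivial real-valued valuation and let (L, v_L) be any field extension of K equipped with a real-valued valuation v_L extending v_K, with rings of integers K° and L°. Then H₁(𝕃_{L°/K°}) = 0 if and only if H₁(𝕃_{L/K}) = 0, and the latter holds precisely when L is a separable field extension of K. -/

import Mathlib

set_option synthInstance.maxHeartbeats 800000
set_option maxHeartbeats 1600000

noncomputable section

/-- The unit ball (ring of integers) of a real-valued additive semi-valuation. -/
def AddValuation.unitBall {A : Type*} [CommRing A] (v : AddValuation A (WithTop ℝ)) :
    Subring A where
  carrier := {a | 0 ≤ v a}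
  zero_mem' := by simp only [Set.mem_setOf_eq, AddValuation.map_zero]; exact le_top
  one_mem' := by simp only [Set.mem_setOf_eq, AddValuation.map_one]; exact le_refl _
  add_mem' := by
    intro a b ha hb
    exact le_trans (le_min ha hb) (v.map_add a b)
  mul_mem' := by
    intro a b ha hb
    simp only [Set.mem_setOf_eq, AddValuation.map_mul]
    exact add_nonneg ha hb
  neg_mem' := by
    intro a ha
    simpa only [Set.mem_setOf_eq, AddValuation.map_neg] using ha

/-- A real-valued additive valuation on a field is *non-trivial* if it does not vanish on all
of `K^×`. -/
def AddValuation.IsNontrivial {K : Type*} [Field K] (v : AddValuation K (WithTop ℝ)) : Prop :=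
  ∃ x : K, x ≠ 0 ∧ v x ≠ 0

/-- A field extension `M / K` is *separably generated* if it admits a separating transcendence
basis: a subset `T ⊆ M` algebraically independent over `K` such that `M` is (algebraic and)
separable over the subfield `K(T)` generated by `T`. -/
def IsSeparablyGenerated (K M : Type*) [Field K] [Field M] [Algebra K M] : Prop :=
  ∃ T : Set M, AlgebraicIndependent K ((↑) : T → M) ∧
    Algebra.IsSeparable (IntermediateField.adjoin K T) M

/-- A (possibly transcendental) field extension `L / K` is *separable* if every finitely
generated subextension is separably generated. -/
def IsSeparableFieldExtension (K L : Type*) [Field K] [Field L] [Algebra K L] : Prop :=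
  ∀ S : Finset L, IsSeparablyGenerated K (IntermediateField.adjoin K (S : Set L))

section Part1
set_option synthInstance.maxHeartbeats 800000
set_option maxHeartbeats 1600000
noncomputable section
open MvPolynomial

/-- kernel of the tautological presentation `R[B] → B` -/
def kerP (R B : Type*) [CommRing R] [CommRing B] [Algebra R B] : Ideal (MvPolynomial B R) :=
  RingHom.ker (aeval (R := R) (id : B → B))

def TFc (R B : Type*) [CommRing R] [CommRing B] [Algebra R B] : Prop :=
  ∀ r : R, r ≠ 0 → ∀ f ∈ kerP R B, C r * f ∈ kerP R B ^ 2 → f ∈ kerP R B ^ 2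

def CIc {R A B : Type*} [CommRing R] [CommRing A] [CommRing B] [Algebra R A] [Algebra R B]
    (φ : A →ₐ[R] B) : Prop :=
  ∀ f ∈ kerP R A, rename φ f ∈ kerP R B ^ 2 → f ∈ kerP R A ^ 2

lemma mem_kerP_rename {R A B : Type*} [CommRing R] [CommRing A] [CommRing B] [Algebra R A]
    [Algebra R B] (φ : A →ₐ[R] B) (f : MvPolynomial A R) :
    aeval (id : B → B) (rename φ f) = φ (aeval (id : A → A) f) := by
  rw [aeval_rename]
  rw [← AlgHom.comp_apply, MvPolynomial.comp_aeval]; rfl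

lemma kerP_map_le {R A B : Type*} [CommRing R] [CommRing A] [CommRing B] [Algebra R A]
    [Algebra R B] (φ : A →ₐ[R] B) : (kerP R A).map (rename φ : MvPolynomial A R →ₐ[R] _) ≤ kerP R B := by
  rw [Ideal.map_le_iff_le_comap]
  intro f hf
  have hf' : aeval (id : A → A) f = 0 := hf
  change aeval (id : B → B) (rename φ f) = 0
  rw [mem_kerP_rename, hf', map_zero]

lemma kerP_sq_rename {R A B : Type*} [CommRing R] [CommRing A] [CommRing B] [Algebra R A]
    [Algebra R B] (φ : A →ₐ[R] B) {f : MvPolynomial A R} (hf : f ∈ kerP R A ^ 2) :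
    rename φ f ∈ kerP R B ^ 2 := by
  have := Ideal.mem_map_of_mem (rename φ : MvPolynomial A R →ₐ[R] _) hf
  rw [Ideal.map_pow] at this
  exact Ideal.pow_right_mono (kerP_map_le φ) 2 this

lemma exists_rename_eq {R : Type*} {A B : Type*} [CommRing R] (ι : A → B) (x : MvPolynomial B R)
    (h : (x.vars : Set B) ⊆ Set.range ι) : ∃ x1 : MvPolynomial A R, rename ι x1 = x := by
  have : x ∈ supported R (Set.range ι) := (mem_supported).2 h
  rw [supported_eq_range_rename] at this
  obtain ⟨y, hy⟩ := this
  choose g hg using fun b : Set.range ι => b.2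
  refine ⟨rename g y, ?_⟩
  rw [rename_rename, ← hy]
  congr 1
  change rename (ι ∘ g) = rename _
  congr 1
  funext b
  exact hg b

open Classical in
lemma kerP_sq_lift {R : Type*} {B : Type*} [CommRing R] [CommRing B] [Algebra R B]
    {x : MvPolynomial B R} (hx : x ∈ kerP R B ^ 2) :
    ∃ S : Finset B, ∀ (B1 : Type*) [CommRing B1] [Algebra R B1] (ι : B1 →ₐ[R] B),
      Function.Injective ι → (S : Set B) ⊆ Set.range ι →
      ∀ x1, rename ι x1 = x → x1 ∈ kerP R B1 ^ 2 := by
  suffices H : ∃ S : Finset B, ∀ (B1 : Type _) [CommRing B1] [Algebra R B1] (ι : B1 →ₐ[R] B),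
      Function.Injective ι → (S : Set B) ⊆ Set.range ι →
      ∃ x1 ∈ kerP R B1 ^ 2, rename ι x1 = x by
    obtain ⟨S, hS⟩ := H
    refine ⟨S, fun B1 _ _ ι hι h x1 hx1 => ?_⟩
    obtain ⟨x2, h2, h3⟩ := hS B1 ι hι h
    rwa [rename_injective ι hι (hx1.trans h3.symm)]
  rw [pow_two] at hx
  induction hx using Submodule.mul_induction_on' with
  | mem_mul_mem a ha b hb =>
    refine ⟨a.vars ∪ b.vars, fun B1 _ _ ι hι h => ?_⟩
    rw [Finset.coe_union, Set.union_subset_iff] at h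
    obtain ⟨a1, ha1⟩ := exists_rename_eq ι a h.1
    obtain ⟨b1, hb1⟩ := exists_rename_eq ι b h.2
    refine ⟨a1 * b1, ?_, by rw [map_mul, ha1, hb1]⟩
    rw [pow_two]
    refine Ideal.mul_mem_mul ?_ ?_
    · apply hι
      change ι (aeval id a1) = _
      rw [← mem_kerP_rename, ha1, map_zero]; exact ha
    · apply hι
      change ι (aeval id b1) = _
      rw [← mem_kerP_rename, hb1, map_zero]; exact hb
  | add a ha b hb iha ihb =>
    obtain ⟨S, hS⟩ := iha
    obtain ⟨T, hT⟩ := ihb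
    refine ⟨S ∪ T, fun B1 _ _ ι hι h => ?_⟩
    rw [Finset.coe_union, Set.union_subset_iff] at h
    obtain ⟨a1, ha1, ha2⟩ := hS B1 ι hι h.1
    obtain ⟨b1, hb1, hb2⟩ := hT B1 ι hι h.2
    exact ⟨a1 + b1, add_mem ha1 hb1, by rw [map_add, ha2, hb2]⟩

open Classical in
lemma TFc_of_union {R : Type*} {B : Type*} [CommRing R] [CommRing B] [Algebra R B]
    (H : ∀ S : Finset B, ∃ (B1 : Type _) (_ : CommRing B1) (_ : Algebra R B1) (ι : B1 →ₐ[R] B),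
      Function.Injective ι ∧ (S : Set B) ⊆ Set.range ι ∧ TFc R B1) : TFc R B := by
  intro r hr f hf hrf
  obtain ⟨S, hS⟩ := kerP_sq_lift hrf
  obtain ⟨B1, _, _, ι, hι, hsub, htf⟩ := H (S ∪ f.vars)
  rw [Finset.coe_union, Set.union_subset_iff] at hsub
  obtain ⟨f1, hf1⟩ := exists_rename_eq ι f hsub.2
  have h1 := hS B1 ι hι hsub.1 (C r * f1) (by rw [map_mul, rename_C, hf1])
  have h2 : f1 ∈ kerP R B1 := by
    apply hι
    change ι (aeval id f1) = _
    rw [← mem_kerP_rename, hf1, map_zero]; exact hf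
  rw [← hf1]
  exact kerP_sq_rename ι (htf r hr f1 h2 h1)

lemma CIc_of_union {R : Type*} {A B : Type*} [CommRing R] [CommRing A] [CommRing B] [Algebra R A]
    [Algebra R B] (φ : A →ₐ[R] B)
    (H : ∀ S : Finset B, ∃ (B1 : Type _) (_ : CommRing B1) (_ : Algebra R B1) (ι : B1 →ₐ[R] B)
      (φ1 : A →ₐ[R] B1), ι.comp φ1 = φ ∧ 
      Function.Injective ι ∧ (S : Set B) ⊆ Set.range ι ∧ CIc φ1) : CIc φ := by
  intro f hf hrf
  obtain ⟨S, hS⟩ := kerP_sq_lift hrf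
  obtain ⟨B1, _, _, ι, φ1, rfl, hι, hsub, htf⟩ := H S
  refine htf f hf (hS B1 ι hι hsub (rename φ1 f) ?_)
  rw [rename_rename]; rfl

lemma CIc.comp {R : Type*} {A B D : Type*} [CommRing R] [CommRing A] [CommRing B] [CommRing D]
    [Algebra R A] [Algebra R B] [Algebra R D] {φ : A →ₐ[R] B} {ψ : B →ₐ[R] D}
    (hφ : CIc φ) (hψ : CIc ψ) : CIc (ψ.comp φ) := by
  intro f hf h
  refine hφ f hf (hψ _ (kerP_map_le φ (Ideal.mem_map_of_mem _ hf)) ?_)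
  rw [rename_rename]; exact h

/-- TF descends along CI maps. -/
lemma TFc_of_CIc {R : Type*} {A B : Type*} [CommRing R] [CommRing A] [CommRing B]
    [Algebra R A] [Algebra R B] {φ : A →ₐ[R] B} (hφ : CIc φ) (hB : TFc R B) : TFc R A := by
  intro r hr f hf h
  refine hφ f hf (hB r hr _ (kerP_map_le φ (Ideal.mem_map_of_mem _ hf)) ?_)
  have := kerP_sq_rename φ h
  rwa [map_mul, rename_C] at this
end
end Part1

section Part2
set_option synthInstance.maxHeartbeats 800000
set_option maxHeartbeats 1600000
noncomputable section
open TensorProduct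

section HS
variable {P A P' B : Type*} [CommRing P] [CommRing A] [CommRing P'] [CommRing B]
  [Algebra P A] [Algebra P P'] [Algebra A B] [Algebra P B] [Algebra P' B]
  [IsScalarTower P A B] [IsScalarTower P P' B]

variable (P') in
/-- multiplication `P' ⊗ I → P'` -/
def hsMu (I : Ideal P) : P' ⊗[P] I →ₗ[P'] P' :=
  LinearMap.liftBaseChange P' ((Algebra.linearMap P P').comp I.subtype)

variable (P' B) in
def hsPhi (I : Ideal P) : P' ⊗[P] I →ₗ[P'] B ⊗[P] I :=
  AlgebraTensorModule.map (Algebra.linearMap P' B) (LinearMap.id : I →ₗ[P] I)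

@[simp] lemma hsMu_tmul (I : Ideal P) (p : P') (i : I) :
    hsMu P' I (p ⊗ₜ i) = p * algebraMap P P' i := by
  simp [hsMu]

@[simp] lemma hsPhi_tmul (I : Ideal P) (p : P') (i : I) :
    hsPhi P' B I (p ⊗ₜ i) = (algebraMap P' B p) ⊗ₜ i := by
  simp [hsPhi]

lemma hsMu_injective [Module.Flat P P'] (I : Ideal P) : Function.Injective (hsMu P' I) := by
  have h := Module.Flat.lTensor_preserves_injective_linearMap (M := P') I.subtype
    I.injective_subtype
  have h2 : (hsMu P' I).restrictScalars P =
      (TensorProduct.rid P P').toLinearMap ∘ₗ (I.subtype.lTensor P') := by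
    ext p i
    simp [Algebra.smul_def, mul_comm]
  intro a b hab
  apply h
  apply (TensorProduct.rid P P').injective
  have := LinearMap.congr_fun h2 a
  have h3 := LinearMap.congr_fun h2 b
  simp only [LinearMap.coe_restrictScalars, LinearMap.comp_apply, LinearEquiv.coe_coe] at this h3
  rw [← this, ← h3, hab]

lemma hsMu_range (I : Ideal P) : (I.map (algebraMap P P') : Ideal P') = LinearMap.range (hsMu P' I) := by
  apply le_antisymm
  · rw [Ideal.map_le_iff_le_comap]
    intro i hi
    exact ⟨1 ⊗ₜ ⟨i, hi⟩, by simp⟩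
  · rintro _ ⟨w, rfl⟩
    induction w using TensorProduct.induction_on with
    | zero => simp
    | tmul p i =>
      rw [hsMu_tmul]
      exact Ideal.mul_mem_left _ _ (Ideal.mem_map_of_mem _ i.2)
    | add a b ha hb => rw [map_add]; exact add_mem ha hb

lemma hsPhi_ker_iff [Module.Flat P P'] (hs : Function.Surjective (algebraMap P' B)) (I : Ideal P)
    (w : P' ⊗[P] I) :
    hsPhi P' B I w = 0 ↔ hsMu P' I w ∈ RingHom.ker (algebraMap P' B) * I.map (algebraMap P P') := by
  set J := RingHom.ker (algebraMap P' B)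
  have hex := rTensor_exact (M := J) (N := P') (P := B) (R := P) I
    (f := (Submodule.subtype J).restrictScalars P) (g := (Algebra.linearMap P' B).restrictScalars P)
    (by
      intro x
      simp only [LinearMap.coe_restrictScalars, Algebra.linearMap_apply, Set.mem_range, Submodule.coe_subtype]
      constructor
      · intro h; exact ⟨⟨x, h⟩, rfl⟩
      · rintro ⟨y, rfl⟩; exact y.2) hs
  have hphi : ∀ w, hsPhi P' B I w = (((Algebra.linearMap P' B).restrictScalars P).rTensor I) w := by
    intro w; rfl
  rw [hphi, hex w]
  constructor
  · rintro ⟨z, rfl⟩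
    induction z using TensorProduct.induction_on with
    | zero => simp
    | tmul p i =>
      simp only [LinearMap.rTensor_tmul, LinearMap.coe_restrictScalars, Submodule.subtype_apply, hsMu_tmul]
      exact Ideal.mul_mem_mul p.2 (Ideal.mem_map_of_mem _ i.2)
    | add a b ha hb => rw [map_add, map_add]; exact add_mem ha hb
  · intro h
    suffices H : ∀ x ∈ J * I.map (algebraMap P P'),
        ∃ z, hsMu P' I ((((Submodule.subtype J).restrictScalars P).rTensor I) z) = x by
      obtain ⟨z, hz⟩ := H _ h
      exact ⟨z, hsMu_injective I hz⟩
    intro x hx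
    induction hx using Submodule.mul_induction_on' with
    | mem_mul_mem a ha b hb =>
      rw [hsMu_range] at hb
      obtain ⟨v, rfl⟩ := hb
      induction v using TensorProduct.induction_on with
      | zero => exact ⟨0, by simp⟩
      | tmul p i =>
        refine ⟨(⟨a * p, J.mul_mem_right p ha⟩ : J) ⊗ₜ i, ?_⟩
        simp [mul_assoc]
      | add c d hc hd =>
        obtain ⟨z1, h1⟩ := hc
        obtain ⟨z2, h2⟩ := hd
        exact ⟨z1 + z2, by rw [map_add, map_add, h1, h2, map_add, mul_add]⟩
    | add c hc' d hd' hc hd =>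
        obtain ⟨z1, h1⟩ := hc
        obtain ⟨z2, h2⟩ := hd
        exact ⟨z1 + z2, by rw [map_add, map_add, h1, h2]⟩

/-- `A ⊗ I = I / I^2`. -/
lemma tmul_eq_zero_iff_sq (hs : Function.Surjective (algebraMap P A)) (f : RingHom.ker (algebraMap P A)) :
    (1 : A) ⊗ₜ[P] f = 0 ↔ (f : P) ∈ RingHom.ker (algebraMap P A) ^ 2 := by
  have := hsPhi_ker_iff (P := P) (P' := P) (B := A) hs (RingHom.ker (algebraMap P A)) (1 ⊗ₜ f)
  rw [hsPhi_tmul, hsMu_tmul] at this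
  simpa [pow_two] using this

lemma exists_one_tmul (hs : Function.Surjective (algebraMap P A)) (I : Ideal P) (w : A ⊗[P] I) :
    ∃ f : I, w = 1 ⊗ₜ f := by
  induction w using TensorProduct.induction_on with
  | zero => exact ⟨0, by simp⟩
  | tmul a i =>
    obtain ⟨p, rfl⟩ := hs a
    exact ⟨p • i, by rw [TensorProduct.tmul_smul, TensorProduct.smul_tmul', Algebra.smul_def, mul_one]⟩
  | add a b ha hb =>
    obtain ⟨f, rfl⟩ := ha
    obtain ⟨g, rfl⟩ := hb
    exact ⟨f + g, by rw [TensorProduct.tmul_add]⟩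

variable (hPA : Function.Surjective (algebraMap P A)) (hPB : Function.Surjective (algebraMap P' B))
include hPA hPB

lemma hs_tf [Module.Flat P P'] [Module.Flat A B] (r : P)
    (hr : ∀ f ∈ RingHom.ker (algebraMap P A), r * f ∈ RingHom.ker (algebraMap P A) ^ 2 →
      f ∈ RingHom.ker (algebraMap P A) ^ 2)
    {x : P'} (hx : x ∈ (RingHom.ker (algebraMap P A)).map (algebraMap P P'))
    (hrx : algebraMap P P' r * x ∈ RingHom.ker (algebraMap P' B) *
      (RingHom.ker (algebraMap P A)).map (algebraMap P P')) :
    x ∈ RingHom.ker (algebraMap P' B) * (RingHom.ker (algebraMap P A)).map (algebraMap P P') := by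
  set I := RingHom.ker (algebraMap P A)
  rw [hsMu_range] at hx
  obtain ⟨w, rfl⟩ := hx
  rw [← hsPhi_ker_iff hPB]
  have h1 : hsPhi P' B I (algebraMap P P' r • w) = 0 := by
    rw [hsPhi_ker_iff hPB, map_smul, smul_eq_mul]; exact hrx
  have hinj : Function.Injective (LinearMap.lsmul A (A ⊗[P] I) (algebraMap P A r)) := by
    rw [← LinearMap.ker_eq_bot, LinearMap.ker_eq_bot']
    intro m hm
    obtain ⟨f, rfl⟩ := exists_one_tmul hPA I m
    have : (1 : A) ⊗ₜ[P] (r • f) = 0 := by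
      rw [TensorProduct.tmul_smul, ← algebraMap_smul A]; exact hm
    rw [tmul_eq_zero_iff_sq hPA] at this
    rw [tmul_eq_zero_iff_sq hPA]
    exact hr f f.2 this
  have hinj2 := Module.Flat.lTensor_preserves_injective_linearMap (M := B) _ hinj
  apply (AlgebraTensorModule.cancelBaseChange P A B B I).symm.injective
  apply hinj2
  rw [map_zero, map_zero]
  have h3 : ∀ z : B ⊗[A] (A ⊗[P] I), (LinearMap.lTensor B
      (LinearMap.lsmul A (A ⊗[P] I) (algebraMap P A r))) z = (algebraMap P B r) • z := by
    intro z
    induction z using TensorProduct.induction_on with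
    | zero => simp
    | tmul b m =>
      rw [LinearMap.lTensor_tmul, LinearMap.lsmul_apply, TensorProduct.tmul_smul,
        IsScalarTower.algebraMap_apply P A B]
      exact (algebraMap_smul B (algebraMap P A r) (b ⊗ₜ[A] m)).symm
    | add a b ha hb => rw [map_add, ha, hb, smul_add]
  rw [h3, ← map_smul]
  rw [map_smul, algebraMap_smul] at h1
  rw [algebraMap_smul, h1, map_zero]

lemma hs_ci [Module.Flat P P'] {f : P} (hf : f ∈ RingHom.ker (algebraMap P A)) (s : P')
    (hsf : s * algebraMap P P' f ∈ RingHom.ker (algebraMap P' B) *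
      (RingHom.ker (algebraMap P A)).map (algebraMap P P'))
    (D : Type*) [CommRing D] [Algebra A D] [Algebra B D] [IsScalarTower A B D]
    [Module.FaithfullyFlat A D] (hsD : IsUnit (algebraMap B D (algebraMap P' B s))) :
    f ∈ RingHom.ker (algebraMap P A) ^ 2 := by
  set I := RingHom.ker (algebraMap P A)
  have h1 : hsPhi P' B I (s ⊗ₜ ⟨f, hf⟩) = 0 := by
    rw [hsPhi_ker_iff hPB, hsMu_tmul]; exact hsf
  rw [hsPhi_tmul] at h1
  have h2 := congrArg (AlgebraTensorModule.cancelBaseChange P A B B I).symm h1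
  rw [map_zero, AlgebraTensorModule.cancelBaseChange_symm_tmul] at h2
  have h3 := congrArg ((Algebra.linearMap B D).restrictScalars A |>.rTensor (A ⊗[P] I)) h2
  rw [map_zero, LinearMap.rTensor_tmul] at h3
  simp only [LinearMap.coe_restrictScalars, Algebra.linearMap_apply] at h3
  have h4 : (1 : D) ⊗ₜ[A] ((1 : A) ⊗ₜ[P] (⟨f, hf⟩ : I)) = 0 := by
    obtain ⟨u, hu⟩ := hsD
    have := congrArg (fun z => (↑u⁻¹ : D) • z) h3
    simpa [TensorProduct.smul_tmul', ← hu] using this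
  rw [← tmul_eq_zero_iff_sq hPA ⟨f, hf⟩]
  have := Module.FaithfullyFlat.tensorProduct_mk_injective (A := A) (B := D) (A ⊗[P] I)
  apply this
  rw [map_zero]
  exact h4
end HS

section ideal
variable {P' : Type*} [CommRing P'] {I J : Ideal P'} [I.IsPrime] {G : P'} (hJ : J = I ⊔ Ideal.span {G})
include hJ

lemma hs_sq : J ^ 2 = J * I ⊔ Ideal.span {G ^ 2} := by
  apply le_antisymm
  · nth_rewrite 1 [pow_two]
    nth_rewrite 2 [hJ]
    rw [Ideal.mul_sup]
    refine sup_le le_sup_left ?_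
    nth_rewrite 1 [hJ]
    rw [Ideal.sup_mul]
    refine sup_le (le_sup_of_le_left ?_) (le_sup_of_le_right ?_)
    · rw [mul_comm]
      refine Ideal.mul_mono_left ?_
      rw [hJ]; exact le_sup_right
    · rw [Ideal.span_singleton_mul_span_singleton, pow_two]
  · rw [pow_two J]
    refine sup_le (Ideal.mul_mono_right (hJ ▸ le_sup_left)) ?_
    rw [Ideal.span_singleton_le_iff_mem, pow_two]
    have : G ∈ J := hJ ▸ Ideal.mem_sup_right (Ideal.mem_span_singleton_self G)
    exact Ideal.mul_mem_mul this this

lemma hs_inter {x : P'} (hx : x ∈ I) (hx2 : x ∈ J ^ 2) : x ∈ J * I := by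
  have hIJ : J * I ≤ I := Ideal.mul_le_right
  by_cases hG : G ∈ I
  · have : J = I := by
      rw [hJ, sup_eq_left, Ideal.span_singleton_le_iff_mem]; exact hG
    rw [this, ← pow_two]
    rwa [this] at hx2
  rw [hs_sq hJ, Submodule.mem_sup] at hx2
  obtain ⟨a, ha, b, hb, rfl⟩ := hx2
  obtain ⟨h, rfl⟩ := Ideal.mem_span_singleton'.1 hb
  refine add_mem ha ?_
  have h1 : h * G ^ 2 ∈ I := (Ideal.add_mem_iff_right I (hIJ ha)).1 hx
  have h2 : h ∈ I := by
    rcases Ideal.IsPrime.mem_or_mem ‹_› h1 with h | h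
    · exact h
    · exact absurd (Ideal.IsPrime.mem_of_pow_mem ‹_› _ h) hG
  rw [mul_comm h, pow_two, mul_assoc]
  refine Ideal.mul_mem_mul ?_ (I.mul_mem_left _ h2)
  exact hJ ▸ Ideal.mem_sup_right (Ideal.mem_span_singleton_self G)

lemma hs_tf_full (r : P') (hrB : ∀ h, r * h ∈ J → h ∈ J)
    (hrI : ∀ x ∈ I, r * x ∈ J * I → x ∈ J * I) {f : P'} (hf : f ∈ J) (hrf : r * f ∈ J ^ 2) :
    f ∈ J ^ 2 := by
  have hIJ : J * I ≤ I := Ideal.mul_le_right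
  have hIJ' : I ≤ J := hJ ▸ le_sup_left
  have hJI : J * I ≤ J ^ 2 := by rw [pow_two]; exact Ideal.mul_mono_right hIJ'
  have hGJ : G ∈ J := hJ ▸ Ideal.mem_sup_right (Ideal.mem_span_singleton_self G)
  by_cases hG : G ∈ I
  · have : J = I := by
      rw [hJ, sup_eq_left, Ideal.span_singleton_le_iff_mem]; exact hG
    apply hJI
    refine hrI f (this ▸ hf) ?_
    have h3 : J * I = J ^ 2 := by rw [pow_two, ← this]
    rwa [h3]
  have hf0 := hf
  rw [hJ, Submodule.mem_sup] at hf
  obtain ⟨a, ha, b, hb, rfl⟩ := hf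
  obtain ⟨h, rfl⟩ := Ideal.mem_span_singleton'.1 hb
  have hh : h ∈ J := by
    have h0 := hrf
    rw [hs_sq hJ, Submodule.mem_sup] at h0
    obtain ⟨c, hc, d, hd, hcd⟩ := h0
    obtain ⟨k, rfl⟩ := Ideal.mem_span_singleton'.1 hd
    apply hrB
    have h1 : G * (r * h - k * G) ∈ I := by
      have : G * (r * h - k * G) = c - r * a := by linear_combination -hcd
      rw [this]
      exact sub_mem (hIJ hc) (I.mul_mem_left _ ha)
    have h2 := (Ideal.IsPrime.mem_or_mem ‹_› h1).resolve_left hG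
    have := add_mem (hIJ' h2) (J.mul_mem_left k hGJ)
    simpa using this
  have hhG : h * G ∈ J ^ 2 := by rw [pow_two]; exact Ideal.mul_mem_mul hh hGJ
  refine add_mem (hJI (hrI a ha (hs_inter hJ (I.mul_mem_left _ ha) ?_))) hhG
  rw [mul_add] at hrf
  exact (Ideal.add_mem_iff_left _ (Ideal.mul_mem_left _ _ hhG)).1 hrf
end ideal
end
end Part2

section Part3
set_option synthInstance.maxHeartbeats 800000
set_option maxHeartbeats 1600000
noncomputable section
open TensorProduct MvPolynomial Algebra

section
variable {R B : Type*} [CommRing R] [CommRing B] [Algebra R B]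

def TFh (R B : Type*) [CommRing R] [CommRing B] [Algebra R B] : Prop :=
  ∀ r : R, r ≠ 0 → ∀ t : H1Cotangent R B, algebraMap R B r • t = 0 → t = 0

lemma kerP_eq : kerP R B = (Generators.self R B).toExtension.ker := rfl

lemma ext_smul_mk (E : Extension R B) (s : E.Ring) (f : E.ker) :
    algebraMap E.Ring B s • Extension.Cotangent.mk f = Extension.Cotangent.mk (s • f) := by
  rw [algebraMap_smul, map_smul]

lemma ext_smul_mk_eq_zero (E : Extension R B) (s : E.Ring) (f : E.ker) :
    algebraMap E.Ring B s • Extension.Cotangent.mk f = 0 ↔ s * f ∈ E.ker ^ 2 := by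
  rw [ext_smul_mk, Extension.Cotangent.mk_eq_zero_iff]; rfl

lemma ext_h1_tf (E : Extension R B) (r : R)
    (h : ∀ f ∈ E.ker, algebraMap R E.Ring r * f ∈ E.ker ^ 2 → f ∈ E.ker ^ 2)
    (t : E.H1Cotangent) (ht : algebraMap R B r • t = 0) : t = 0 := by
  apply E.h1Cotangentι_injective
  obtain ⟨f, hf⟩ := Extension.Cotangent.mk_surjective (E.h1Cotangentι t)
  have h1 := congrArg E.h1Cotangentι ht
  rw [map_smul, map_zero, ← hf, IsScalarTower.algebraMap_apply R E.Ring B,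
    ext_smul_mk_eq_zero] at h1
  rw [map_zero, ← hf, Extension.Cotangent.mk_eq_zero_iff]
  exact h f f.2 h1

lemma mem_h1_iff (f : (Generators.self R B).toExtension.ker) :
    (Generators.self R B).toExtension.cotangentComplex (Extension.Cotangent.mk f) = 0 ↔
    ∀ i, aeval (id : B → B) (pderiv i (show MvPolynomial B R from f.1)) = 0 := by
  rw [← ((Generators.self R B).cotangentSpaceBasis.repr).map_eq_zero_iff, Finsupp.ext_iff]
  refine forall_congr' fun i => ?_
  rw [Extension.cotangentComplex_mk]
  exact Eq.congr_left ((Generators.self R B).cotangentSpaceBasis_repr_one_tmul f.1 i)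

lemma pderiv_of_mem_sq {f : MvPolynomial B R} (hf : f ∈ kerP R B ^ 2) (i : B) :
    aeval (id : B → B) (pderiv i f) = 0 := by
  have hf1 : f ∈ kerP R B := Ideal.pow_le_self two_ne_zero hf
  let f' : (Generators.self R B).toExtension.ker := ⟨f, hf1⟩
  have h0 : Extension.Cotangent.mk f' = 0 := (Extension.Cotangent.mk_eq_zero_iff f').2 hf
  exact (mem_h1_iff f').1 (by rw [h0, map_zero]) i

lemma TFh_of_TFc (h : TFc R B) : TFh R B := fun r hr t ht =>
  ext_h1_tf (Generators.self R B).toExtension r (h r hr) t ht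

lemma TFc_of_TFh (hB : ∀ r : R, r ≠ 0 → ∀ b : B, algebraMap R B r * b = 0 → b = 0)
    (h : TFh R B) : TFc R B := by
  intro r hr f hf hrf
  have hd : ∀ i, aeval (id : B → B) (pderiv i f) = 0 := by
    intro i
    apply hB r hr
    have := pderiv_of_mem_sq hrf i
    rw [C_mul', Derivation.map_smul, map_smul, Algebra.smul_def] at this
    exact this
  let E := (Generators.self R B).toExtension
  let t : E.H1Cotangent := ⟨Extension.Cotangent.mk (P := E) ⟨f, hf⟩, (mem_h1_iff ⟨f, hf⟩).2 hd⟩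
  have ht : t = 0 := by
    apply h r hr
    apply E.h1Cotangentι_injective
    rw [map_smul, map_zero, IsScalarTower.algebraMap_apply R E.Ring B]
    exact (ext_smul_mk_eq_zero E _ _).2 hrf
  have := congrArg E.h1Cotangentι ht
  exact (Extension.Cotangent.mk_eq_zero_iff (P := E) ⟨f, hf⟩).1 this
end

/-- localization -/
lemma TFh_localization {R B B' : Type*} [CommRing R] [CommRing B] [CommRing B'] [Algebra R B]
    [Algebra R B'] [Algebra B B'] [IsScalarTower R B B'] (S : Submonoid B) [IsLocalization S B']
    (h : TFh R B) : TFh R B' := by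
  intro r hr t ht
  have hloc := H1Cotangent.isLocalizedModule R (T := B') S
  obtain ⟨⟨t0, s⟩, hs⟩ := IsLocalizedModule.surj S (H1Cotangent.map R R B B') t
  have h1 : H1Cotangent.map R R B B' (algebraMap R B r • t0) = 0 := by
    rw [map_smul, ← hs, Submonoid.smul_def]
    dsimp only
    rw [← algebraMap_smul B' (algebraMap R B r), ← algebraMap_smul B' (s : B), smul_comm,
      ← IsScalarTower.algebraMap_apply, ht, smul_zero]
  rw [IsLocalizedModule.eq_zero_iff S] at h1
  obtain ⟨s', hs'⟩ := h1
  rw [Submonoid.smul_def, smul_comm] at hs'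
  have h2 := h r hr _ hs'
  have h3 : H1Cotangent.map R R B B' t0 = 0 := by
    rw [IsLocalizedModule.eq_zero_iff S]; exact ⟨s', h2⟩
  dsimp only at hs
  rw [h3] at hs
  exact (IsLocalizedModule.smul_injective (H1Cotangent.map R R B B') s) (hs.trans (smul_zero _).symm)
end
end Part3

section Part4
set_option linter.style.haveILetI false
set_option linter.unusedSectionVars false
set_option synthInstance.maxHeartbeats 800000
set_option maxHeartbeats 400000
noncomputable section
open TensorProduct MvPolynomial Algebra

section
variable {R A B : Type*} [CommRing R] [CommRing A] [CommRing B] [IsDomain A]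
  [Algebra R A] [Algebra R B] [Algebra A B] [IsScalarTower R A B]
  {σ : Type*} (y : σ → B)

variable (R A) in
/-- the presentation of `B` from a presentation over `A`. -/
def hyPi : MvPolynomial σ (MvPolynomial A R) →ₐ[R] B :=
  ((aeval y : MvPolynomial σ A →ₐ[A] B).restrictScalars R).comp
    (mapAlgHom (aeval (R := R) (_root_.id : A → A)))

lemma hyTheta_surj : Function.Surjective
    (MvPolynomial.map (σ := σ) (aeval (R := R) (_root_.id : A → A) : MvPolynomial A R →+* A)) :=
  MvPolynomial.map_surjective _ fun a => ⟨X a, by simp⟩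

lemma hyPi_apply (p) : hyPi R A y p = aeval y
    (MvPolynomial.map (aeval (R := R) (_root_.id : A → A) : MvPolynomial A R →+* A) p) := rfl

lemma hyPi_C (p : MvPolynomial A R) :
    hyPi R A y (C p) = algebraMap A B (aeval (R := R) (_root_.id : A → A) p) := by
  rw [hyPi_apply, map_C, aeval_C]; rfl

variable (hy : Function.Surjective (aeval y : MvPolynomial σ A →ₐ[A] B))
  (g : MvPolynomial σ A) (hg : RingHom.ker (aeval y : MvPolynomial σ A →ₐ[A] B) = Ideal.span {g})

include hy in
lemma hyPi_surj : Function.Surjective (hyPi R A y) := hy.comp hyTheta_surj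

lemma hy_map_eq : (kerP R A).map (C : MvPolynomial A R →+* MvPolynomial σ (MvPolynomial A R)) =
    RingHom.ker (MvPolynomial.map (σ := σ)
      (aeval (R := R) (_root_.id : A → A) : MvPolynomial A R →+* A)) := by
  rw [MvPolynomial.ker_map]; rfl

lemma hy_prime : ((kerP R A).map
    (C : MvPolynomial A R →+* MvPolynomial σ (MvPolynomial A R))).IsPrime := by
  rw [hy_map_eq]
  exact RingHom.ker_isPrime _

include hg in
lemma hy_ker : ∃ G : MvPolynomial σ (MvPolynomial A R), RingHom.ker (hyPi R A y) =
    (kerP R A).map (C : MvPolynomial A R →+* MvPolynomial σ (MvPolynomial A R)) ⊔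
      Ideal.span {G} := by
  obtain ⟨G, hG⟩ := hyTheta_surj (R := R) g
  refine ⟨G, ?_⟩
  rw [hy_map_eq]
  apply le_antisymm
  · intro p hp
    have h1 : MvPolynomial.map (aeval (R := R) (_root_.id : A → A) : MvPolynomial A R →+* A) p ∈
      RingHom.ker (aeval y : MvPolynomial σ A →ₐ[A] B) := hp
    rw [hg, Ideal.mem_span_singleton'] at h1
    obtain ⟨q, hq⟩ := h1
    obtain ⟨q, rfl⟩ := hyTheta_surj (R := R) q
    rw [Submodule.mem_sup]
    refine ⟨p - q * G, ?_, q * G, Ideal.mul_mem_left _ _ (Ideal.mem_span_singleton_self _), by ring⟩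
    rw [RingHom.mem_ker, map_sub, map_mul, hG, hq, sub_self]
  · refine sup_le ?_ ?_
    · intro p hp
      rw [RingHom.mem_ker] at hp ⊢
      rw [hyPi_apply, hp, map_zero]
    · rw [Ideal.span_singleton_le_iff_mem, RingHom.mem_ker, hyPi_apply, hG]
      have : g ∈ RingHom.ker (aeval y : MvPolynomial σ A →ₐ[A] B) := by
        rw [hg]; exact Ideal.mem_span_singleton_self _
      exact this

include hy hg

theorem hyper_tf [Module.Flat A B]
    (hB : ∀ r : R, r ≠ 0 → ∀ b : B, algebraMap R B r * b = 0 → b = 0)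
    (hA : TFc R A) : TFh R B := by
  obtain ⟨G, hG⟩ := hy_ker (R := R) y g hg
  have hpr := hy_prime (R := R) (A := A) (σ := σ)
  let E : Extension R B := Extension.ofSurjective (hyPi R A y) (hyPi_surj y hy)
  have : FormallySmooth R E.Ring :=
    FormallySmooth.comp R (MvPolynomial A R) (MvPolynomial σ (MvPolynomial A R))
  intro r hr t ht
  apply (E.equivH1CotangentOfFormallySmooth).symm.injective
  rw [map_zero]
  refine ext_h1_tf E r ?_ _ (by rw [← map_smul, ht, map_zero])
  letI : Algebra (MvPolynomial A R) A := (aeval (R := R) (_root_.id : A → A)).toAlgebra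
  letI : Algebra (MvPolynomial σ (MvPolynomial A R)) B := (hyPi R A y).toAlgebra
  letI : Algebra (MvPolynomial A R) B := ((algebraMap A B).comp (algebraMap (MvPolynomial A R) A)).toAlgebra
  haveI : IsScalarTower (MvPolynomial A R) A B := .of_algebraMap_eq fun _ => rfl
  haveI : IsScalarTower (MvPolynomial A R) (MvPolynomial σ (MvPolynomial A R)) B :=
    .of_algebraMap_eq fun p => (hyPi_C y p).symm
  intro f hf hrf
  refine hs_tf_full (I := (kerP R A).map (C : MvPolynomial A R →+* MvPolynomial σ (MvPolynomial A R)))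
    (J := RingHom.ker (hyPi R A y)) hG (C (C r)) ?_ ?_ hf hrf
  · intro h hh
    apply hB r hr
    have : hyPi R A y (C (C r) * h) = 0 := hh
    rw [map_mul, hyPi_C, aeval_C, ← IsScalarTower.algebraMap_apply] at this
    exact this
  · intro x hx hrx
    exact hs_tf (P := MvPolynomial A R) (A := A) (P' := MvPolynomial σ (MvPolynomial A R)) (B := B)
      (fun a => ⟨X a, aeval_X _ _⟩) (hyPi_surj y hy) (C r) (hA r hr) hx hrx

theorem hyper_ci {B' D : Type*} [CommRing B'] [CommRing D] [Algebra R B'] [Algebra A B']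
    [Algebra B B'] [IsScalarTower R A B'] [IsScalarTower R B B'] [IsScalarTower A B B']
    (S : Submonoid B) [IsLocalization S B'] [Algebra A D] [Algebra B D] [IsScalarTower A B D]
    [Module.FaithfullyFlat A D] (hS : ∀ s ∈ S, IsUnit (algebraMap B D s))
    (hinj : Function.Injective (algebraMap A B')) :
    CIc (IsScalarTower.toAlgHom R A B') := by
  obtain ⟨G, hG⟩ := hy_ker (R := R) y g hg
  have hpr := hy_prime (R := R) (A := A) (σ := σ)
  intro f hf hf2
  have hd : ∀ i, aeval (_root_.id : A → A) (pderiv i f) = 0 := by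
    intro i
    apply hinj
    have := pderiv_of_mem_sq hf2 (algebraMap A B' i)
    have h2 := pderiv_rename (f := (IsScalarTower.toAlgHom R A B')) hinj i f
    have h3 := mem_kerP_rename (IsScalarTower.toAlgHom R A B') (pderiv i f)
    rw [← h2] at h3
    rw [map_zero]
    exact h3.symm.trans this
  let EA := (Generators.self R A).toExtension
  let EB' := (Generators.self R B').toExtension
  let f' : EA.ker := ⟨f, hf⟩
  let t : EA.H1Cotangent := ⟨Extension.Cotangent.mk f', (mem_h1_iff f').2 hd⟩
  let hom1 : EA.Hom EB' :=
    { toRingHom := (rename (IsScalarTower.toAlgHom R A B') : MvPolynomial A R →ₐ[R] MvPolynomial B' R).toRingHom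
      toRingHom_algebraMap := fun r => (rename (IsScalarTower.toAlgHom R A B') : MvPolynomial A R →ₐ[R] MvPolynomial B' R).commutes r
      algebraMap_toRingHom := fun p => mem_kerP_rename (IsScalarTower.toAlgHom R A B') p }
  have h1 : Extension.H1Cotangent.map hom1 t = 0 := by
    apply EB'.h1Cotangentι_injective
    exact (Extension.Cotangent.mk_eq_zero_iff (P := EB') _).2 hf2
  have h2 : H1Cotangent.map R R B B' (H1Cotangent.map R R A B t) = 0 := by
    rw [← h1]
    rw [Extension.H1Cotangent.map_eq hom1 ((Generators.defaultHom (Generators.self R B) (Generators.self R B')).toExtensionHom.comp 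
      (Generators.defaultHom (Generators.self R A) (Generators.self R B)).toExtensionHom), 
      Extension.H1Cotangent.map_comp]
    rfl
  have hloc := H1Cotangent.isLocalizedModule R (T := B') S
  rw [IsLocalizedModule.eq_zero_iff S] at h2
  obtain ⟨s, hs⟩ := h2
  let E : Extension R B := Extension.ofSurjective (hyPi R A y) (hyPi_surj y hy)
  have : FormallySmooth R E.Ring :=
    FormallySmooth.comp R (MvPolynomial A R) (MvPolynomial σ (MvPolynomial A R))
  let hom2 : EA.Hom E :=
    { toRingHom := (C : MvPolynomial A R →+* MvPolynomial σ (MvPolynomial A R))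
      toRingHom_algebraMap := fun r => rfl
      algebraMap_toRingHom := fun p => hyPi_C y p }
  let hom3 : (Generators.self R B).toExtension.Hom E :=
    { toRingHom := (aeval E.σ : MvPolynomial B R →ₐ[R] E.Ring).toRingHom
      toRingHom_algebraMap := (MvPolynomial.aeval E.σ).commutes
      algebraMap_toRingHom := by
        have : (IsScalarTower.toAlgHom R E.Ring B).comp (MvPolynomial.aeval E.σ) =
            aeval (R := R) (_root_.id : B → B) := by
          apply MvPolynomial.algHom_ext
          intro i
          simp
        exact DFunLike.congr_fun this }
  have h3 : Extension.H1Cotangent.map hom2 t =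
      Extension.H1Cotangent.map hom3 (H1Cotangent.map R R A B t) := by
    rw [Extension.H1Cotangent.map_eq hom2 (hom3.comp 
      (Generators.defaultHom (Generators.self R A) (Generators.self R B)).toExtensionHom), 
      Extension.H1Cotangent.map_comp]
    rfl
  have h4 : (s : B) • Extension.H1Cotangent.map hom2 t = 0 := by
    rw [h3, ← map_smul]
    rw [Submonoid.smul_def] at hs
    rw [hs, map_zero]
  obtain ⟨p, hp⟩ := hyPi_surj (R := R) y hy s
  have h5 : p * C f ∈ RingHom.ker (hyPi R A y) ^ 2 := by
    have hker : C f ∈ E.ker := by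
      change hyPi R A y (C f) = 0
      have hf0 : aeval (R := R) (_root_.id : A → A) f = 0 := hf
      rw [hyPi_C, hf0, map_zero]
    let f2 : E.ker := ⟨C f, hker⟩
    have h6 : E.h1Cotangentι (Extension.H1Cotangent.map hom2 t) = Extension.Cotangent.mk f2 := rfl
    have h7 := congrArg E.h1Cotangentι h4
    rw [map_smul, map_zero, h6] at h7
    have h8 : algebraMap E.Ring B p = s := hp
    rw [← h8] at h7
    exact (ext_smul_mk_eq_zero E p f2).1 h7
  have hCf : C f ∈ (kerP R A).map (C : MvPolynomial A R →+* MvPolynomial σ (MvPolynomial A R)) :=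
    Ideal.mem_map_of_mem _ hf
  have h6 := hs_inter hG (Ideal.mul_mem_left _ p hCf) h5
  letI : Algebra (MvPolynomial A R) A := (aeval (R := R) (_root_.id : A → A)).toAlgebra
  letI : Algebra (MvPolynomial σ (MvPolynomial A R)) B := (hyPi R A y).toAlgebra
  letI : Algebra (MvPolynomial A R) B := ((algebraMap A B).comp (algebraMap (MvPolynomial A R) A)).toAlgebra
  haveI : IsScalarTower (MvPolynomial A R) A B := .of_algebraMap_eq fun _ => rfl
  haveI : IsScalarTower (MvPolynomial A R) (MvPolynomial σ (MvPolynomial A R)) B :=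
    .of_algebraMap_eq fun p => (hyPi_C y p).symm
  refine hs_ci (P := MvPolynomial A R) (A := A) (P' := MvPolynomial σ (MvPolynomial A R)) (B := B)
      (fun a => ⟨X a, aeval_X _ _⟩) (hyPi_surj y hy) hf p h6 D ?_
  have : algebraMap (MvPolynomial σ (MvPolynomial A R)) B p = s := hp
  rw [this]
  exact hS s s.2
end
end
end Part4

section Part5
set_option linter.style.haveILetI false
set_option linter.unusedSectionVars false
set_option synthInstance.maxHeartbeats 800000
set_option maxHeartbeats 400000
noncomputable section
open MvPolynomial Algebra

def StepHyp (A D : Type*) [CommRing A] [CommRing D] [Algebra A D] : Prop :=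
  ∀ S : Finset D, ∃ (σ : Type) (y : σ → D) (g : MvPolynomial σ A),
    RingHom.ker (aeval y : MvPolynomial σ A →ₐ[A] D) = Ideal.span {g} ∧
    ∀ s ∈ S, ∃ p q : MvPolynomial σ A, IsUnit (aeval y q) ∧ s * aeval y q = aeval y p

section
variable {R A D : Type*} [CommRing R] [CommRing A] [CommRing D] [IsDomain A] [IsDomain D]
  [Algebra R A] [Algebra R D] [Algebra A D] [IsScalarTower R A D] [Module.FaithfullyFlat A D]
  (hflat : ∀ B : Subalgebra A D, Module.Flat A B)
  (hinj : Function.Injective (algebraMap R D)) (hH : StepHyp A D)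
include hflat hinj hH

theorem step_abs : CIc (IsScalarTower.toAlgHom R A D) ∧ (TFc R A → TFc R D) := by
  have hAD : Function.Injective (algebraMap A D) := FaithfulSMul.algebraMap_injective A D
  have key : ∀ S : Finset D, ∃ (B1 : Type _) (_ : CommRing B1) (_ : Algebra R B1) (ι : B1 →ₐ[R] D)
      (φ1 : A →ₐ[R] B1), ι.comp φ1 = (IsScalarTower.toAlgHom R A D) ∧ 
      Function.Injective ι ∧ (S : Set D) ⊆ Set.range ι ∧ CIc φ1 ∧ (TFc R A → TFc R B1) := by
    intro S
    obtain ⟨σ, y, g, hg, hS⟩ := hH S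
    let B : Subalgebra A D := (aeval y : MvPolynomial σ A →ₐ[A] D).range
    haveI := hflat B
    let Sm : Submonoid B := (IsUnit.submonoid D).comap (algebraMap B D)
    let B' := Localization Sm
    have hSm : ∀ s : Sm, IsUnit (algebraMap B D s) := fun s => s.2
    have hSu : ∀ s ∈ Sm, IsUnit (algebraMap B D s) := fun s hs => hs
    let y' : σ → B := fun i => ⟨y i, (AlgHom.mem_range (aeval y : MvPolynomial σ A →ₐ[A] D)).2 ⟨X i, aeval_X _ _⟩⟩
    have hy'0 : ∀ p : MvPolynomial σ A, ((aeval y' p : B) : D) = aeval y p := by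
      intro p
      have : (B.val.comp (aeval y' : MvPolynomial σ A →ₐ[A] B)) = aeval y := by
        apply MvPolynomial.algHom_ext
        intro i; simp [y']
      exact DFunLike.congr_fun this p
    have hy' : Function.Surjective (aeval y' : MvPolynomial σ A →ₐ[A] B) := by
      rintro ⟨_, p, rfl⟩
      exact ⟨p, Subtype.ext (hy'0 p)⟩
    have hg' : RingHom.ker (aeval y' : MvPolynomial σ A →ₐ[A] B) = Ideal.span {g} := by
      rw [← hg]
      ext p
      rw [RingHom.mem_ker, RingHom.mem_ker, ← hy'0]
      exact Subtype.ext_iff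
    have hBD : Function.Injective (algebraMap B D) := Subtype.val_injective
    let ι : B' →ₐ[R] D := IsLocalization.liftAlgHom (M := Sm) (f := IsScalarTower.toAlgHom R B D) hSm
    have hι0 : ∀ b : B, ι (algebraMap B B' b) = b := by
      intro b
      exact IsLocalization.lift_eq _ b
    have hι : Function.Injective ι := by
      rw [injective_iff_map_eq_zero]
      intro x hx
      obtain ⟨b, s, rfl⟩ := IsLocalization.exists_mk'_eq Sm x
      have h1 : IsLocalization.mk' B' b s * algebraMap B B' s = algebraMap B B' b :=
        IsLocalization.mk'_spec _ _ _
      have h2 := congrArg ι h1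
      rw [map_mul, hx, zero_mul, hι0] at h2
      have h3 : b = 0 := hBD h2.symm
      rw [h3, IsLocalization.mk'_zero]
    have hAB' : Function.Injective (algebraMap A B') := by
      intro a b hab
      apply hAD
      have := congrArg ι hab
      rw [IsScalarTower.algebraMap_apply A B B', IsScalarTower.algebraMap_apply A B B', hι0, hι0] at this
      exact this
    have htf : ∀ r : R, r ≠ 0 → ∀ b : D, algebraMap R D r * b = 0 → b = 0 := by
      intro r hr b hb
      refine (mul_eq_zero.1 hb).resolve_left ?_
      intro h0; exact hr ((map_eq_zero_iff _ hinj).1 h0)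
    refine ⟨B', inferInstance, inferInstance, ι, IsScalarTower.toAlgHom R A B', ?_, hι, ?_, ?_, ?_⟩
    · ext a
      change ι (algebraMap A B' a) = algebraMap A D a
      rw [IsScalarTower.algebraMap_apply A B B', hι0]; rfl
    · intro s hs
      obtain ⟨p, q, hq, hpq⟩ := hS s hs
      have hq' : aeval y' q ∈ Sm := by
        change IsUnit ((aeval y' q : B) : D)
        rw [hy'0]; exact hq
      refine ⟨IsLocalization.mk' B' (aeval y' p) ⟨aeval y' q, hq'⟩, ?_⟩
      have h1 := congrArg ι (IsLocalization.mk'_spec B' (aeval y' p) ⟨aeval y' q, hq'⟩)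
      rw [map_mul, hι0, hι0, hy'0] at h1
      rw [hy'0] at h1
      exact hq.mul_right_cancel (h1.trans hpq.symm)
    · exact hyper_ci (R := R) y' hy' g hg' (B' := B') (D := D) Sm hSu hAB'
    · intro hA
      refine TFc_of_TFh ?_ (TFh_localization Sm (hyper_tf y' hy' g hg' ?_ hA))
      · intro r hr b hb
        apply hι
        rw [map_zero]
        apply htf r hr
        rw [← ι.commutes, ← map_mul, hb, map_zero]
      · intro r hr b hb
        apply hBD
        rw [map_zero]
        apply htf r hr
        rw [IsScalarTower.algebraMap_apply R B D, ← map_mul, hb, map_zero]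
  constructor
  · refine CIc_of_union _ fun S => ?_
    obtain ⟨B1, i1, i2, ι, φ, h1, h2, h3, h4, -⟩ := key S
    exact ⟨B1, i1, i2, ι, φ, h1, h2, h3, h4⟩
  · intro hA
    refine TFc_of_union fun S => ?_
    obtain ⟨B1, i1, i2, ι, φ, h1, h2, h3, -, h4⟩ := key S
    exact ⟨B1, i1, i2, ι, h2, h3, h4 hA⟩
end
end
end Part5

section Part6
set_option linter.style.haveILetI false
set_option linter.unusedSectionVars false
set_option synthInstance.maxHeartbeats 800000
set_option maxHeartbeats 400000
noncomputable section

section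
open Polynomial
/-- linear polynomial lemma -/
lemma linear_dvd {B M : Type*} [CommRing B] [IsDomain B] [Field M] (j : B →+* M)
    (hj : Function.Injective j) (x c : B) (hx : Prime x) (hc : ¬ x ∣ c) (w : M)
    (hw : j x * w = j c) (f : B[X]) (hf : f.eval₂ j w = 0) : (C x * X - C c) ∣ f := by
  induction hn : f.natDegree using Nat.strong_induction_on generalizing f with
  | _ n ih =>
  subst hn
  by_cases h0 : f.natDegree = 0
  · rw [Polynomial.eq_C_of_natDegree_eq_zero h0, eval₂_C, map_eq_zero_iff _ hj] at hf
    rw [Polynomial.eq_C_of_natDegree_eq_zero h0, hf, C_0]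
    exact dvd_zero _
  · set m := f.natDegree with hm
    have hsum : ∑ i ∈ Finset.range (m+1), f.coeff i * c^i * x^(m-i) = 0 := by
      apply hj
      rw [map_zero, map_sum, ← zero_mul (j x ^ m), ← hf, eval₂_eq_sum_range, Finset.sum_mul]
      apply Finset.sum_congr rfl
      intro i hi
      have him : i ≤ m := Nat.lt_succ_iff.1 (Finset.mem_range.1 hi)
      rw [map_mul, map_mul, map_pow, map_pow, ← hw]
      conv_rhs => rw [← Nat.add_sub_cancel' him]
      rw [pow_add]
      ring_nf
    rw [Finset.sum_range_succ, Nat.sub_self, pow_zero, mul_one] at hsum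
    have hd : x ∣ f.coeff m * c^m := by
      rw [← dvd_add_right (a := x) (b := ∑ i ∈ Finset.range m, f.coeff i * c^i * x^(m-i)), hsum]
      · exact dvd_zero _
      · apply Finset.dvd_sum
        intro i hi
        have := Finset.mem_range.1 hi
        exact Dvd.dvd.mul_left (dvd_pow_self _ (by omega)) _
    obtain ⟨h, hh⟩ := (hx.dvd_or_dvd hd).resolve_right (fun h => hc (hx.dvd_of_dvd_pow h))
    have hdvd : (C x * X - C c) ∣ (C x * X - C c) * (C h * X^(m-1)) := dvd_mul_right _ _
    rw [← dvd_sub_left hdvd]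
    have hexp : (C x * X - C c) * (C h * X^(m-1)) = C (f.coeff m) * X^m - C (c*h) * X^(m-1) := by
      rw [hh, C_mul, C_mul]
      conv_rhs => rw [← Nat.sub_add_cancel (Nat.pos_of_ne_zero h0)]
      rw [pow_succ]
      ring_nf
      simp
    refine ih _ ?_ _ ?_ rfl
    · have h1 : f - (C x * X - C c) * (C h * X^(m-1)) = f.eraseLead + C (c*h) * X^(m-1) := by
        rw [hexp, ← self_sub_C_mul_X_pow, leadingCoeff, ← hm]
        ring
      rw [h1]
      refine lt_of_le_of_lt (natDegree_add_le _ _) (max_lt ?_ ?_)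
      · exact lt_of_le_of_lt (eraseLead_natDegree_le _) (by omega)
      · exact lt_of_le_of_lt (natDegree_C_mul_X_pow_le _ _) (by omega)
    · rw [eval₂_sub, hf, eval₂_mul]
      simp [hw]
end
section
open MvPolynomial
lemma ker_two {A M : Type*} [CommRing A] [IsDomain A] [Field M] [Algebra A M] (u w : M)
    (hu : Transcendental A u) (c : A) (hc : c ≠ 0) (huw : u * w = algebraMap A M c) :
    RingHom.ker (aeval (Fin.cons w (fun _ => u)) : MvPolynomial (Fin 2) A →ₐ[A] M) =
      Ideal.span {X 1 * X 0 - C c} := by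
  have hu' : AlgebraicIndependent A (fun _ : Fin 1 => u) :=
    (algebraicIndependent_unique_type_iff (x := fun _ : Fin 1 => u)).2 hu
  have key : ∀ f : MvPolynomial (Fin 2) A, aeval (Fin.cons w (fun _ => u) : Fin 2 → M) f =
      (finSuccEquiv A 1 f).eval₂ (aeval (fun _ : Fin 1 => u) : MvPolynomial (Fin 1) A →ₐ[A] M).toRingHom w := by
    intro f
    induction f using MvPolynomial.induction_on with
    | C a =>
      have : finSuccEquiv A 1 (C a) = Polynomial.C (C a) := (finSuccEquiv A 1).commutes a
      rw [this]; simp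
    | add p q hp hq => rw [map_add, map_add, Polynomial.eval₂_add, hp, hq]
    | mul_X p i hp =>
      rw [map_mul, map_mul, Polynomial.eval₂_mul, hp]
      congr 1
      refine Fin.cases ?_ (fun j => ?_) i
      · rw [finSuccEquiv_X_zero]; simp
      · rw [finSuccEquiv_X_succ]; simp
  ext f
  rw [RingHom.mem_ker, Ideal.mem_span_singleton]
  constructor
  · intro hf
    rw [key] at hf
    have := linear_dvd (aeval (fun _ : Fin 1 => u) : MvPolynomial (Fin 1) A →ₐ[A] M).toRingHom
      hu' (X 0) (C c) (X_prime) ?_ w ?_ _ hf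
    · have h2 := map_dvd (finSuccEquiv A 1).symm this
      rw [AlgEquiv.symm_apply_apply] at h2
      convert h2 using 1
      apply (finSuccEquiv A 1).injective
      rw [AlgEquiv.apply_symm_apply]
      have h1 : finSuccEquiv A 1 (X 1) = Polynomial.C (X 0) := finSuccEquiv_X_succ (n := 1) (j := 0)
      rw [map_sub, map_mul, finSuccEquiv_X_zero, h1]
      congr 1
      exact (finSuccEquiv A 1).commutes c
    · intro h
      obtain ⟨q, hq⟩ := h
      have := congrArg (aeval (fun _ : Fin 1 => (0 : A))) hq
      rw [map_mul, aeval_X, zero_mul, aeval_C] at this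
      exact hc this
    · simpa using huw
  · rintro ⟨g, rfl⟩
    rw [map_mul]
    have : aeval (Fin.cons w (fun _ => u) : Fin 2 → M) (X 1 * X 0 - C c : MvPolynomial (Fin 2) A) = 0 := by
      rw [map_sub, map_mul, aeval_X, aeval_X, aeval_C, ← huw]
      exact sub_self _
    rw [this, zero_mul]

lemma ker_one {A M : Type*} [CommRing A] [Field M] [Algebra A M] (y : M)
    (g : Polynomial A) (hg : ∀ f : Polynomial A, Polynomial.aeval y f = 0 ↔ g ∣ f) :
    RingHom.ker (aeval (fun _ : PUnit => y) : MvPolynomial PUnit A →ₐ[A] M) =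
      Ideal.span {(uniqueAlgEquiv A PUnit).symm g} := by
  ext f
  rw [RingHom.mem_ker, Ideal.mem_span_singleton]
  have h1 : aeval (fun _ : PUnit => y) f = Polynomial.aeval y (uniqueAlgEquiv A PUnit f) :=
    (eval₂_const_uniqueAlgEquiv).symm
  rw [h1, hg]
  constructor
  · intro h
    have := map_dvd (uniqueAlgEquiv A PUnit).symm h
    rwa [AlgEquiv.symm_apply_apply] at this
  · intro h
    have := map_dvd (uniqueAlgEquiv A PUnit) h
    rwa [AlgEquiv.apply_symm_apply] at this
end
section
open Polynomial
/-- Gauss lemma -/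
lemma exists_gen {A F M : Type*} [CommRing A] [IsDomain A] [IsBezout A] [Field F] [Field M]
    [Algebra A F] [IsFractionRing A F] [Algebra F M] [Algebra A M] [IsScalarTower A F M] (y : M) :
    ∃ g : A[X], ∀ f : A[X], aeval y f = 0 ↔ g ∣ f := by
  classical
  by_cases hy : Transcendental F y
  · refine ⟨0, fun f => ?_⟩
    rw [zero_dvd_iff]
    constructor
    · intro h
      have h2 : aeval y (f.map (algebraMap A F)) = 0 := by rwa [aeval_map_algebraMap]
      have h3 := (transcendental_iff.1 hy) _ h2
      exact (Polynomial.map_eq_zero_iff (IsFractionRing.injective A F)).1 h3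
    · rintro rfl; simp
  have hy' : IsIntegral F y := by
    rw [Transcendental, not_not] at hy; exact hy.isIntegral
  obtain ⟨hGCD⟩ : Nonempty (NormalizedGCDMonoid A) := by
    letI : GCDMonoid A := IsBezout.toGCDDomain A
    infer_instance
  set P := minpoly F y with hP
  have hP0 : P ≠ 0 := minpoly.ne_zero hy'
  set N := IsLocalization.integerNormalization (nonZeroDivisors A) P with hN
  obtain ⟨b, hb, hbN⟩ := IsLocalization.integerNormalization_spec (nonZeroDivisors A) P
  rw [← hN] at hbN
  have hN0 : N ≠ 0 := by
    intro h
    rw [h, Polynomial.map_zero] at hbN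
    have := smul_eq_zero.1 hbN.symm
    rcases this with h | h
    · exact nonZeroDivisors.ne_zero hb h
    · exact hP0 h
  set G := N.primPart with hG
  have hGN : N = C N.content * G := N.eq_C_content_mul_primPart
  have hc0 : N.content ≠ 0 := by rwa [Ne, content_eq_zero_iff]
  -- G.map = unit * P
  have hGP : C (algebraMap A F N.content) * G.map (algebraMap A F) = C (algebraMap A F b) * P := by
    rw [← Polynomial.map_C, ← Polynomial.map_mul, ← hGN, hbN, Algebra.smul_def]; rfl
  have inj := IsFractionRing.injective A F
  have hcF : algebraMap A F N.content ≠ 0 := by rwa [Ne, map_eq_zero_iff _ inj]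
  have hbF : algebraMap A F b ≠ 0 := by
    rw [Ne, map_eq_zero_iff _ inj]; exact nonZeroDivisors.ne_zero hb
  have hGdvd : ∀ q : F[X], P ∣ q → G.map (algebraMap A F) ∣ q := by
    rintro _ ⟨q, rfl⟩
    refine ⟨C ((algebraMap A F b)⁻¹ * algebraMap A F N.content) * q, ?_⟩
    have : P = C ((algebraMap A F b)⁻¹) * (C (algebraMap A F N.content) * G.map (algebraMap A F)) := by
      rw [hGP, ← mul_assoc, ← C_mul, inv_mul_cancel₀ hbF, C_1, one_mul]
    rw [C_mul]
    calc P * q = _ := by rw [this]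
      _ = _ := by ring
  have hG0 : aeval y G = 0 := by
    have h1 : aeval y (C (algebraMap A F N.content) * G.map (algebraMap A F)) = 0 := by
      rw [hGP, map_mul, minpoly.aeval, mul_zero]
    rw [map_mul, aeval_C, aeval_map_algebraMap] at h1
    refine (mul_eq_zero.1 h1).resolve_left fun h => hcF ?_
    exact (map_eq_zero_iff _ (algebraMap F M).injective).1 h
  refine ⟨G, fun f => ⟨fun hf => ?_, ?_⟩⟩
  · have h2 : aeval y (f.map (algebraMap A F)) = 0 := by rwa [aeval_map_algebraMap]
    obtain ⟨q, hq⟩ := hGdvd _ (minpoly.dvd F y h2)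
    obtain ⟨d, hd, hdq⟩ := IsLocalization.integerNormalization_spec (nonZeroDivisors A) q
    set Q := IsLocalization.integerNormalization (nonZeroDivisors A) q
    have hd0 : d ≠ 0 := nonZeroDivisors.ne_zero hd
    have h3 : C d * f = G * Q := by
      apply Polynomial.map_injective _ inj
      rw [Polynomial.map_mul, Polynomial.map_mul, hq, hdq, Polynomial.map_C, Algebra.smul_def]
      change _ = _ * (C (algebraMap A F d) * q)
      ring
    have h4 : d ∣ Q.content := by
      have h5 : d ∣ (G * Q).content := by
        rw [dvd_content_iff_C_dvd, ← h3]; exact dvd_mul_right _ _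
      have h6 := h5.trans (associated_content_mul (p := G) (q := Q)).dvd
      rw [(N.isPrimitive_primPart).content_eq_one, one_mul] at h6
      exact h6
    obtain ⟨Q', hQ'⟩ := (dvd_content_iff_C_dvd).1 h4
    refine ⟨Q', ?_⟩
    have h6 : (C d : A[X]) ≠ 0 := by rwa [Ne, C_eq_zero]
    apply mul_left_cancel₀ h6
    rw [h3, hQ']; ring
  · rintro ⟨q, rfl⟩
    rw [map_mul, hG0, zero_mul]
end
end
end Part6

section Part7
set_option linter.style.haveILetI false
set_option linter.unusedSectionVars false
set_option synthInstance.maxHeartbeats 800000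
set_option maxHeartbeats 400000
noncomputable section
open Polynomial NNReal

section
variable {A M : Type*} [Field M] (v : Valuation M ℝ≥0) [CommRing A] [Algebra A M]

/-- representability in the localization of `B` at elements of valuation one. -/
def RepB (B : Subalgebra A M) (s : M) : Prop :=
  ∃ b ∈ B, ∃ u ∈ B, v u = 1 ∧ s * u = b

/-- monomial times unit -/
def MonoB (B : Subalgebra A M) (T : Submonoid M) (z : M) : Prop :=
  ∃ k ∈ T, ∃ b ∈ B, v b = 1 ∧ z = k * b

variable {v} {B : Subalgebra A M} {T : Submonoid M}

lemma MonoB.mul {z w : M} (hz : MonoB v B T z) (hw : MonoB v B T w) : MonoB v B T (z * w) := by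
  obtain ⟨k, hk, b, hb, hvb, rfl⟩ := hz
  obtain ⟨k', hk', b', hb', hvb', rfl⟩ := hw
  exact ⟨k * k', T.mul_mem hk hk', b * b', B.mul_mem hb hb', by rw [map_mul, hvb, hvb', one_mul],
    by ring⟩

lemma MonoB.const {k : M} (hk : k ∈ T) : MonoB v B T k :=
  ⟨k, hk, 1, B.one_mem, map_one v, (mul_one k).symm⟩

lemma MonoB.prod (s : Multiset M) (hs : ∀ z ∈ s, MonoB v B T z) : MonoB v B T s.prod := by
  induction s using Multiset.induction_on with
  | empty => rw [Multiset.prod_zero]; exact MonoB.const T.one_mem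
  | cons a s ih =>
    rw [Multiset.prod_cons]
    exact (hs a (Multiset.mem_cons_self a s)).mul (ih fun z hz => hs z (Multiset.mem_cons_of_mem hz))

variable {F : Type*} [Field F] [Algebra F M]

lemma MonoB.poly (x : M) (p : F[X]) (hp : p.Splits) (hT : ∀ k : F, algebraMap F M k ∈ T)
    (hx : ∀ e ∈ p.roots, MonoB v B T (x - algebraMap F M e)) : MonoB v B T (aeval x p) := by
  conv => rw [hp.eq_prod_roots]
  rw [map_mul, aeval_C, map_multiset_prod]
  refine (MonoB.const (hT _)).mul (MonoB.prod _ ?_)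
  intro z hz
  rw [Multiset.map_map, Multiset.mem_map] at hz
  obtain ⟨e, he, rfl⟩ := hz
  simpa using hx e he

lemma RepB_of_MonoB {s P Q : M} (hP : MonoB v B T P) (hQ : MonoB v B T Q) (hQ0 : Q ≠ 0)
    (hs : v s ≤ 1) (h : s * Q = P)
    (hT : ∀ k ∈ T, ∀ k' ∈ T, k' ≠ 0 → v (k / k') ≤ 1 → k / k' ∈ B) : RepB v B s := by
  obtain ⟨k, hk, b, hb, hvb, rfl⟩ := hP
  obtain ⟨k', hk', b', hb', hvb', rfl⟩ := hQ
  have hk0 : k' ≠ 0 := left_ne_zero_of_mul hQ0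
  have hb0 : b ≠ 0 := by intro h; rw [h, map_zero] at hvb; exact zero_ne_one hvb
  have h1 : s * b' = k / k' * b := by
    field_simp
    rw [← h]; ring
  have h2 : v (k / k') ≤ 1 := by
    have := congrArg v h1
    rw [map_mul, map_mul, hvb, hvb', mul_one, mul_one] at this
    rwa [← this]
  exact ⟨_, B.mul_mem (hT k hk k' hk' hk0 h2) hb, b', hb', hvb', h1⟩

variable (v) in
/-- the step in terms of elements -/
def StepM (A : Type*) [CommRing A] [Algebra A M] (F' : Set M) : Prop :=
  ∀ S : Finset M, (∀ s ∈ S, s ∈ F' ∧ v s ≤ 1) → ∃ (σ : Type) (y : σ → M) (g : MvPolynomial σ A),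
    (∀ i, y i ∈ F' ∧ v (y i) ≤ 1) ∧
    RingHom.ker (MvPolynomial.aeval y : MvPolynomial σ A →ₐ[A] M) = Ideal.span {g} ∧
    ∀ s ∈ S, RepB v (MvPolynomial.aeval y : MvPolynomial σ A →ₐ[A] M).range s

variable [IsDomain A] [Algebra A F] [IsScalarTower A F M]
  (hA : (v.comap (algebraMap F M)).Integers A)
include hA

lemma int_lift (k : F) (hk : v (algebraMap F M k) ≤ 1) : algebraMap F M k ∈ B := by
  obtain ⟨a, ha⟩ := hA.exists_of_le_one hk
  rw [← ha, ← IsScalarTower.algebraMap_apply]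
  exact B.algebraMap_mem a

lemma stepM_one (F' : Set M)
    (H : ∀ S : Finset M, (∀ s ∈ S, s ∈ F' ∧ v s ≤ 1) → ∃ y : M, y ∈ F' ∧ v y ≤ 1 ∧
      ∀ s ∈ S, RepB v (Algebra.adjoin A {y}) s) : StepM v A F' := by
  intro S hS
  obtain ⟨y, hy, hvy, h⟩ := H S hS
  haveI := hA.isFractionRing
  haveI := ValuationRing.of_integers _ hA
  obtain ⟨g, hg⟩ := exists_gen (A := A) (F := F) y
  refine ⟨PUnit, fun _ => y, _, fun _ => ⟨hy, hvy⟩, ker_one y g hg, ?_⟩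
  rw [← Algebra.adjoin_range_eq_range_aeval]
  simpa using h

lemma mono_AB {x : M} {a c e : F} (hc : c ≠ 0) (hac : v (x - algebraMap F M a) = v (algebraMap F M c))
    (hae : v (x - algebraMap F M a) ≤ v (x - algebraMap F M e)) :
    MonoB v (Algebra.adjoin A {(x - algebraMap F M a) / algebraMap F M c})
      (MonoidHom.mrange (algebraMap F M : F →* M)) (x - algebraMap F M e) := by
  set y := (x - algebraMap F M a) / algebraMap F M c with hy
  have hc' : algebraMap F M c ≠ 0 := by simpa using hc
  have hvc : v (algebraMap F M c) ≠ 0 := by simpa using hc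
  have hvy : v y = 1 := by rw [hy, map_div₀, hac, div_self hvc]
  have hyB : y ∈ Algebra.adjoin A {y} := Algebra.self_mem_adjoin_singleton A y
  have hxe : x - algebraMap F M e = algebraMap F M c * y + algebraMap F M (a - e) := by
    rw [hy, map_sub]; field_simp; ring
  rcases le_or_gt (v (algebraMap F M (a - e))) (v (algebraMap F M c)) with h | h
  · refine ⟨algebraMap F M c, ⟨c, rfl⟩, y + algebraMap F M ((a - e) / c),
      Subalgebra.add_mem _ hyB (int_lift hA _ ?_), ?_, ?_⟩
    · rw [map_div₀, map_div₀]; exact div_le_one_of_le₀ h zero_le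
    · apply le_antisymm
      · refine Valuation.map_add_le _ hvy.le ?_
        rw [map_div₀, map_div₀]; exact div_le_one_of_le₀ h zero_le
      · have : y + algebraMap F M ((a - e) / c) = (x - algebraMap F M e) / algebraMap F M c := by
          rw [hxe, map_div₀]; field_simp
        rw [this, map_div₀, one_le_div₀ (zero_lt_iff.2 hvc), ← hac]
        exact hae
    · rw [hxe, map_div₀]; field_simp
  · have hd : v (algebraMap F M (a - e)) ≠ 0 := (lt_of_le_of_lt zero_le h).ne'
    have hd' : algebraMap F M (a - e) ≠ 0 := by rwa [Ne, ← map_eq_zero v]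
    refine ⟨algebraMap F M (a - e), ⟨a - e, rfl⟩, 1 + algebraMap F M (c / (a - e)) * y,
      Subalgebra.add_mem _ (Subalgebra.one_mem _) (Subalgebra.mul_mem _ (int_lift hA _ ?_) hyB), ?_, ?_⟩
    · rw [map_div₀, map_div₀]; exact div_le_one_of_le₀ h.le zero_le
    · apply Valuation.map_one_add_of_lt
      rw [map_mul, hvy, mul_one, map_div₀, map_div₀]
      exact (div_lt_one₀ (zero_lt_iff.2 hd)).2 h
    · rw [hxe, map_div₀]; field_simp; ring

omit hA in
lemma choose_AB (x : M) (hx : ∀ a : F, algebraMap F M a ≠ x)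
    (hnC : ¬ ∃ a : F, (∀ e : F, v (x - algebraMap F M a) ≤ v (x - algebraMap F M e)) ∧
      ∀ c : F, v (x - algebraMap F M a) ≠ v (algebraMap F M c)) (E : Finset F) :
    ∃ a c : F, c ≠ 0 ∧ v (x - algebraMap F M a) = v (algebraMap F M c) ∧
      ∀ e ∈ E, v (x - algebraMap F M a) ≤ v (x - algebraMap F M e) := by
  have hne : ∀ a : F, v (x - algebraMap F M a) ≠ 0 := by
    intro a h
    rw [map_eq_zero, sub_eq_zero] at h
    exact hx a h.symm
  have hc0 : ∀ a c : F, v (x - algebraMap F M a) = v (algebraMap F M c) → c ≠ 0 := by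
    rintro a c h rfl
    rw [map_zero, map_zero] at h
    exact hne a h
  by_cases hatt : ∃ a : F, ∀ e : F, v (x - algebraMap F M a) ≤ v (x - algebraMap F M e)
  · obtain ⟨a, ha⟩ := hatt
    have : ∃ c : F, v (x - algebraMap F M a) = v (algebraMap F M c) := by
      by_contra h
      push Not at h
      exact hnC ⟨a, ha, h⟩
    obtain ⟨c, hc⟩ := this
    exact ⟨a, c, hc0 a c hc, hc, fun e _ => ha e⟩
  · push Not at hatt
    obtain ⟨a, haE⟩ : ∃ a : F, ∀ e ∈ E, v (x - algebraMap F M a) ≤ v (x - algebraMap F M e) := by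
      rcases E.eq_empty_or_nonempty with rfl | hE
      · exact ⟨0, by simp⟩
      · obtain ⟨a, -, ha⟩ := E.exists_min_image (fun e => v (x - algebraMap F M e)) hE
        exact ⟨a, ha⟩
    obtain ⟨a2, ha2⟩ := hatt a
    refine ⟨a, a2 - a, ?_, ?_, haE⟩
    · intro h; rw [sub_eq_zero] at h; rw [h] at ha2; exact lt_irrefl _ ha2
    · have : algebraMap F M (a2 - a) = (x - algebraMap F M a) - (x - algebraMap F M a2) := by
        rw [map_sub]; ring
      rw [this, Valuation.map_sub_eq_of_lt_left _ ha2]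

/-- Cases A and B. -/
lemma stepM_AB (x : M) (F' : Set M) (hF' : ∀ a c : F, (x - algebraMap F M a) / algebraMap F M c ∈ F')
    (hx : ∀ a : F, algebraMap F M a ≠ x)
    (hnC : ¬ ∃ a : F, (∀ e : F, v (x - algebraMap F M a) ≤ v (x - algebraMap F M e)) ∧
      ∀ c : F, v (x - algebraMap F M a) ≠ v (algebraMap F M c))
    (hrep : ∀ s ∈ F', ∃ p q : F[X], p.Splits ∧ q.Splits ∧ aeval x q ≠ 0 ∧
      s * aeval x q = aeval x p) : StepM v A F' := by
  classical
  refine stepM_one hA F' fun S hS => ?_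
  have hrep' : ∀ s : M, ∃ pq : F[X] × F[X], s ∈ F' → pq.1.Splits ∧ pq.2.Splits ∧ aeval x pq.2 ≠ 0 ∧
      s * aeval x pq.2 = aeval x pq.1 := by
    intro s
    by_cases hs : s ∈ F'
    · obtain ⟨p, q, h⟩ := hrep s hs
      exact ⟨(p, q), fun _ => h⟩
    · exact ⟨0, fun h => absurd h hs⟩
  choose pq hpq using hrep'
  obtain ⟨a, c, hc, hac, hE⟩ := choose_AB x hx hnC
    (S.biUnion fun s => (pq s).1.roots.toFinset ∪ (pq s).2.roots.toFinset)
  have hc' : v (algebraMap F M c) ≠ 0 := by simpa using hc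
  refine ⟨_, hF' a c, ?_, ?_⟩
  · rw [map_div₀, hac, div_self hc']
  · intro s hs
    obtain ⟨h1, h2, h3, h4⟩ := hpq s (hS s hs).1
    have hE' : ∀ e, e ∈ (pq s).1.roots ∨ e ∈ (pq s).2.roots →
        v (x - algebraMap F M a) ≤ v (x - algebraMap F M e) := by
      intro e he
      apply hE
      rw [Finset.mem_biUnion]
      refine ⟨s, hs, ?_⟩
      rwa [Finset.mem_union, Multiset.mem_toFinset, Multiset.mem_toFinset]
    refine RepB_of_MonoB (T := (MonoidHom.mrange (algebraMap F M : F →* M)))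
      (MonoB.poly x _ h1 (fun k => ⟨k, rfl⟩) fun e he => mono_AB hA hc hac (hE' e (Or.inl he)))
      (MonoB.poly x _ h2 (fun k => ⟨k, rfl⟩) fun e he => mono_AB hA hc hac (hE' e (Or.inr he)))
      h3 (hS s hs).2 h4 ?_
    rintro _ ⟨k, rfl⟩ _ ⟨k', rfl⟩ hk hv
    have : (algebraMap F M : F →* M) k / (algebraMap F M : F →* M) k' = algebraMap F M (k / k') :=
      (map_div₀ (algebraMap F M) k k').symm
    rw [this] at hv ⊢
    exact int_lift hA _ hv
end
end
end Part7

section Part8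
set_option linter.style.haveILetI false
set_option linter.unusedSectionVars false
set_option synthInstance.maxHeartbeats 800000
set_option maxHeartbeats 400000
noncomputable section
open Polynomial NNReal Topology Filter

section
variable {A M : Type*} [Field M] {v : Valuation M ℝ≥0} [CommRing A] [Algebra A M]
variable {F : Type*} [Field F] [Algebra F M]
variable [IsDomain A] [Algebra A F] [IsScalarTower A F M]
  (hA : (v.comap (algebraMap F M)).Integers A)
include hA

/-- the two generator algebra -/
abbrev algC (A : Type*) [CommRing A] [Algebra A M] (y : M) (c1 c2 : F) : Subalgebra A M :=
  Algebra.adjoin A {algebraMap F M c2 / y, y / algebraMap F M c1}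

lemma mono_C_aux (x : M) (a : F) (hne : ∀ c : F, v (x - algebraMap F M a) ≠ v (algebraMap F M c))
    (E : Multiset F) :
    ∃ (k : F) (m : ℕ), ∀ c1 c2 : F, c1 ≠ 0 → c2 ≠ 0 →
      (∀ e ∈ E, (v (x - algebraMap F M a) < v (algebraMap F M (a - e)) →
          v (algebraMap F M c1) ≤ v (algebraMap F M (a - e))) ∧
        (v (algebraMap F M (a - e)) < v (x - algebraMap F M a) →
          v (algebraMap F M (a - e)) ≤ v (algebraMap F M c2))) →
      ∃ b ∈ algC A (x - algebraMap F M a) c1 c2, v b = 1 ∧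
        (E.map fun e => x - algebraMap F M e).prod =
          algebraMap F M k * (x - algebraMap F M a) ^ m * b := by
  set y := x - algebraMap F M a with hy
  have hvy : v y ≠ 0 := by simpa using hne 0
  have hy0 : y ≠ 0 := by rwa [Ne, map_eq_zero] at hvy
  induction E using Multiset.induction_on with
  | empty => exact ⟨1, 0, fun c1 c2 _ _ _ => ⟨1, Subalgebra.one_mem _, map_one v, by simp⟩⟩
  | cons e E ih =>
    obtain ⟨k, m, ih⟩ := ih
    have hxe : x - algebraMap F M e = y + algebraMap F M (a - e) := by rw [hy, map_sub]; ring
    rcases lt_or_gt_of_ne (hne (a - e)) with h | h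
    · refine ⟨(a - e) * k, m, fun c1 c2 hc1 hc2 hE => ?_⟩
      obtain ⟨b, hb, hvb, hbE⟩ := ih c1 c2 hc1 hc2 fun e' he' => hE e' (Multiset.mem_cons_of_mem he')
      have h1 := (hE e (Multiset.mem_cons_self e E)).1 h
      have hd : v (algebraMap F M (a - e)) ≠ 0 := (lt_of_le_of_lt zero_le h).ne'
      have hd' : algebraMap F M (a - e) ≠ 0 := by rwa [Ne, ← map_eq_zero v]
      have hc1' : algebraMap F M c1 ≠ 0 := by simpa using hc1
      refine ⟨(1 + algebraMap F M (c1 / (a - e)) * (y / algebraMap F M c1)) * b,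
        Subalgebra.mul_mem _ (Subalgebra.add_mem _ (Subalgebra.one_mem _) (Subalgebra.mul_mem _
          (int_lift hA _ ?_) (Algebra.subset_adjoin (by simp)))) hb, ?_, ?_⟩
      · rw [map_div₀, map_div₀]; exact div_le_one_of_le₀ h1 zero_le
      · rw [map_mul, hvb, mul_one]
        apply Valuation.map_one_add_of_lt
        have : algebraMap F M (c1 / (a - e)) * (y / algebraMap F M c1) = y / algebraMap F M (a - e) := by
          rw [map_div₀]; field_simp
        rw [this, map_div₀]
        exact (div_lt_one₀ (zero_lt_iff.2 hd)).2 h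
      · rw [Multiset.map_cons, Multiset.prod_cons, hbE, hxe, map_mul, map_div₀]; field_simp; ring
    · refine ⟨k, m + 1, fun c1 c2 hc1 hc2 hE => ?_⟩
      obtain ⟨b, hb, hvb, hbE⟩ := ih c1 c2 hc1 hc2 fun e' he' => hE e' (Multiset.mem_cons_of_mem he')
      have h1 := (hE e (Multiset.mem_cons_self e E)).2 h
      have hc2' : algebraMap F M c2 ≠ 0 := by simpa using hc2
      refine ⟨(1 + algebraMap F M ((a - e) / c2) * (algebraMap F M c2 / y)) * b,
        Subalgebra.mul_mem _ (Subalgebra.add_mem _ (Subalgebra.one_mem _) (Subalgebra.mul_mem _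
          (int_lift hA _ ?_) (Algebra.subset_adjoin (by simp)))) hb, ?_, ?_⟩
      · rw [map_div₀, map_div₀]; exact div_le_one_of_le₀ h1 zero_le
      · rw [map_mul, hvb, mul_one]
        apply Valuation.map_one_add_of_lt
        have : algebraMap F M ((a - e) / c2) * (algebraMap F M c2 / y) = algebraMap F M (a - e) / y := by
          rw [map_div₀]; field_simp
        rw [this, map_div₀]
        exact (div_lt_one₀ (zero_lt_iff.2 hvy)).2 h
      · rw [Multiset.map_cons, Multiset.prod_cons, hbE, hxe, map_div₀]; field_simp; ring

lemma mono_C (x : M) (a : F) (hne : ∀ c : F, v (x - algebraMap F M a) ≠ v (algebraMap F M c))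
    (p : F[X]) (hp : p.Splits) :
    ∃ (k : F) (m : ℕ), ∀ c1 c2 : F, c1 ≠ 0 → c2 ≠ 0 →
      (∀ e ∈ p.roots, (v (x - algebraMap F M a) < v (algebraMap F M (a - e)) →
          v (algebraMap F M c1) ≤ v (algebraMap F M (a - e))) ∧
        (v (algebraMap F M (a - e)) < v (x - algebraMap F M a) →
          v (algebraMap F M (a - e)) ≤ v (algebraMap F M c2))) →
      ∃ b ∈ algC A (x - algebraMap F M a) c1 c2, v b = 1 ∧
        aeval x p = algebraMap F M k * (x - algebraMap F M a) ^ m * b := by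
  obtain ⟨k, m, h⟩ := mono_C_aux hA x a hne p.roots
  refine ⟨p.leadingCoeff * k, m, fun c1 c2 hc1 hc2 hE => ?_⟩
  obtain ⟨b, hb, hvb, hbE⟩ := h c1 c2 hc1 hc2 hE
  refine ⟨b, hb, hvb, ?_⟩
  conv_lhs => rw [hp.eq_prod_roots]
  rw [map_mul, aeval_C, map_multiset_prod, Multiset.map_map]
  have : (aeval x ∘ fun e => X - C e : F → M) = fun e => x - algebraMap F M e := by
    ext e; simp
  rw [this, hbE, map_mul]; ring

lemma stepM_C (x : M) (a : F) (F' : Set M) (hx : Transcendental F x)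
    (hne : ∀ c : F, v (x - algebraMap F M a) ≠ v (algebraMap F M c))
    (hroot : ∀ (n : ℕ) (c : F), n ≠ 0 → v (x - algebraMap F M a) ^ n ≠ v (algebraMap F M c))
    (hF1 : ∀ c : F, (x - algebraMap F M a) / algebraMap F M c ∈ F')
    (hF2 : ∀ c : F, algebraMap F M c / (x - algebraMap F M a) ∈ F')
    (hd : ∀ lo hi : ℝ≥0, lo < hi → ∃ c : F, lo < v (algebraMap F M c) ∧ v (algebraMap F M c) < hi)
    (hrep : ∀ s ∈ F', ∃ p q : F[X], p.Splits ∧ q.Splits ∧ aeval x q ≠ 0 ∧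
      s * aeval x q = aeval x p) : StepM v A F' := by
  classical
  intro S hS
  set y := x - algebraMap F M a with hy
  have hvy : v y ≠ 0 := by simpa using hne 0
  have hy0 : y ≠ 0 := by rwa [Ne, map_eq_zero] at hvy
  -- choose representations, for each s: eventual statement
  have key : ∀ s ∈ S, ∀ᶠ t1 in 𝓝 (v y), ∀ᶠ t2 in 𝓝 (v y), ∀ c1 c2 : F, c1 ≠ 0 → c2 ≠ 0 →
      v (algebraMap F M c1) = t1 → v (algebraMap F M c2) = t2 →
      RepB v (algC A y c1 c2) s := by
    intro s hs
    obtain ⟨p, q, hp, hq, hq0, hpq⟩ := hrep s (hS s hs).1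
    obtain ⟨kp, mp, hpm⟩ := mono_C hA x a hne p hp
    obtain ⟨kq, mq, hqm⟩ := mono_C hA x a hne q hq
    have hev1 : ∀ p : F[X], ∀ᶠ t in 𝓝 (v y), ∀ e ∈ p.roots.toFinset, (v y < v (algebraMap F M (a - e)) →
          t ≤ v (algebraMap F M (a - e))) := by
      intro p
      rw [Filter.eventually_all_finset]
      intro e _
      by_cases h : v y < v (algebraMap F M (a - e))
      · filter_upwards [eventually_le_nhds h] with t ht _ using ht
      · exact Eventually.of_forall fun t h' => absurd h' h
    have hev2 : ∀ p : F[X], ∀ᶠ t in 𝓝 (v y), ∀ e ∈ p.roots.toFinset, (v (algebraMap F M (a - e)) < v y →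
          v (algebraMap F M (a - e)) ≤ t) := by
      intro p
      rw [Filter.eventually_all_finset]
      intro e _
      by_cases h : v (algebraMap F M (a - e)) < v y
      · filter_upwards [eventually_ge_nhds h] with t ht _ using ht
      · exact Eventually.of_forall fun t h' => absurd h' h
    have hmem : ∀ᶠ t1 in 𝓝 (v y), ∀ᶠ t2 in 𝓝 (v y), ∀ c1 c2 : F, c1 ≠ 0 → c2 ≠ 0 →
      v (algebraMap F M c1) = t1 → v (algebraMap F M c2) = t2 → kq ≠ 0 →
      v (algebraMap F M kp * y ^ mp / (algebraMap F M kq * y ^ mq)) ≤ 1 →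
      algebraMap F M kp * y ^ mp / (algebraMap F M kq * y ^ mq) ∈ algC A y c1 c2 := by
      by_cases hkq : kq = 0
      · exact Eventually.of_forall fun _ => Eventually.of_forall fun _ c1 c2 _ _ _ _ h => absurd hkq h
      by_cases hv : v (algebraMap F M kp * y ^ mp / (algebraMap F M kq * y ^ mq)) ≤ 1
      swap
      · exact Eventually.of_forall fun _ => Eventually.of_forall fun _ c1 c2 _ _ _ _ h h' =>
          absurd h' hv
      have hkq' : algebraMap F M kq ≠ 0 := by simpa using hkq
      rcases le_or_gt mq mp with hm | hm
      · obtain ⟨n, rfl⟩ := Nat.exists_eq_add_of_le hm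
        have hz : algebraMap F M kp * y ^ (mq + n) / (algebraMap F M kq * y ^ mq) =
            algebraMap F M (kp / kq) * y ^ n := by
          rw [map_div₀, pow_add]; field_simp
        rw [hz] at hv ⊢
        have hcont : ∀ᶠ t in 𝓝 (v y), v (algebraMap F M (kp / kq)) * t ^ n ≤ 1 := by
          by_cases hn : n = 0
          · subst hn
            refine Eventually.of_forall fun t => ?_
            simpa using hv
          · by_cases hk : v (algebraMap F M (kp / kq)) = 0
            · refine Eventually.of_forall fun t => ?_
              rw [hk, zero_mul]; exact zero_le_one
            have hlt : v (algebraMap F M (kp / kq)) * v y ^ n < 1 := by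
              rw [map_mul, map_pow] at hv
              refine lt_of_le_of_ne hv fun h => hroot n (kp / kq)⁻¹ hn ?_
              rw [map_inv₀, map_inv₀]
              exact eq_inv_of_mul_eq_one_right h
            have hc : Tendsto (fun t : ℝ≥0 => v (algebraMap F M (kp / kq)) * t ^ n) (𝓝 (v y))
              (𝓝 (v (algebraMap F M (kp / kq)) * v y ^ n)) :=
              (Continuous.tendsto (by fun_prop) _)
            exact (hc.eventually_lt_const hlt).mono fun t ht => ht.le
        filter_upwards [hcont] with t ht
        refine Eventually.of_forall fun _ c1 c2 hc1 hc2 h1 h2 _ _ => ?_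
        have hc1' : algebraMap F M c1 ≠ 0 := by simpa using hc1
        have : algebraMap F M (kp / kq) * y ^ n =
            algebraMap F M (kp / kq * c1 ^ n) * (y / algebraMap F M c1) ^ n := by
          rw [map_mul, map_pow, div_pow]; field_simp
        rw [this]
        refine Subalgebra.mul_mem _ (int_lift hA _ ?_) (Subalgebra.pow_mem _
          (Algebra.subset_adjoin (by simp)) _)
        rw [map_mul, map_pow, map_mul, map_pow, h1]
        exact ht
      · obtain ⟨n, rfl⟩ := Nat.exists_eq_add_of_le hm.le
        have hn : n ≠ 0 := by omega
        have hz : algebraMap F M kp * y ^ mp / (algebraMap F M kq * y ^ (mp + n)) =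
            algebraMap F M (kp / kq) / y ^ n := by
          rw [map_div₀, pow_add]; field_simp
        rw [hz] at hv ⊢
        have hcont : ∀ᶠ t in 𝓝 (v y), v (algebraMap F M (kp / kq)) ≤ t ^ n := by
          have hlt : v (algebraMap F M (kp / kq)) < v y ^ n := by
            rw [map_div₀ v, map_pow] at hv
            refine lt_of_le_of_ne ?_ fun h => hroot n (kp / kq) hn h.symm
            exact (div_le_one₀ (pow_pos (zero_lt_iff.2 hvy) n)).1 hv
          have hc : Tendsto (fun t : ℝ≥0 => t ^ n) (𝓝 (v y)) (𝓝 (v y ^ n)) :=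
              (Continuous.tendsto (by fun_prop) _)
          exact (hc.eventually_const_lt hlt).mono fun t ht => ht.le
        refine Eventually.of_forall fun _ => ?_
        filter_upwards [hcont] with t ht
        intro c1 c2 hc1 hc2 h1 h2 _ _
        have hc2' : algebraMap F M c2 ≠ 0 := by simpa using hc2
        have hvc2' : v (algebraMap F M c2) ≠ 0 := by simpa using hc2
        have : algebraMap F M (kp / kq) / y ^ n =
            algebraMap F M (kp / kq / c2 ^ n) * (algebraMap F M c2 / y) ^ n := by
          rw [map_div₀ _ (kp / kq), map_pow, div_pow]; field_simp
        rw [this]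
        refine Subalgebra.mul_mem _ (int_lift hA _ ?_) (Subalgebra.pow_mem _
          (Algebra.subset_adjoin (by simp)) _)
        rw [map_div₀ _ (kp / kq), map_pow, map_div₀ v, map_pow]
        apply div_le_one_of_le₀ _ zero_le
        rw [h2]; exact ht
    filter_upwards [hev1 p, hev1 q, hmem] with t1 h1p h1q hm1
    filter_upwards [hev2 p, hev2 q, hm1] with t2 h2p h2q hm2
    rintro c1 c2 hc1 hc2 rfl rfl
    obtain ⟨b, hb, hvb, hbe⟩ := hpm c1 c2 hc1 hc2 fun e he =>
      ⟨h1p e (Multiset.mem_toFinset.2 he), h2p e (Multiset.mem_toFinset.2 he)⟩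
    obtain ⟨b', hb', hvb', hbe'⟩ := hqm c1 c2 hc1 hc2 fun e he =>
      ⟨h1q e (Multiset.mem_toFinset.2 he), h2q e (Multiset.mem_toFinset.2 he)⟩
    rw [hbe'] at hq0
    have hk0 := left_ne_zero_of_mul hq0
    have hkq : kq ≠ 0 := by
      have := left_ne_zero_of_mul hk0
      simpa using this
    have h1 : s * b' = algebraMap F M kp * y ^ mp / (algebraMap F M kq * y ^ mq) * b := by
      rw [hbe, hbe', ← hy] at hpq
      rw [← hy] at hk0
      rw [div_mul_eq_mul_div, eq_div_iff hk0, ← hpq]; ring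
    refine ⟨_, Subalgebra.mul_mem _ (hm2 c1 c2 hc1 hc2 rfl rfl hkq ?_) hb, b', hb', hvb', h1⟩
    have := congrArg v h1
    rw [map_mul, map_mul, hvb, hvb', mul_one, mul_one] at this
    rw [← this]
    exact (hS s hs).2
  have key2 := (Filter.eventually_all_finset S).2 key
  have key3 : ∀ᶠ t1 in 𝓝 (v y), ∀ᶠ t2 in 𝓝 (v y), ∀ s ∈ S, ∀ c1 c2 : F, c1 ≠ 0 → c2 ≠ 0 →
      v (algebraMap F M c1) = t1 → v (algebraMap F M c2) = t2 →
      RepB v (algC A y c1 c2) s :=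
    key2.mono fun t1 h => (Filter.eventually_all_finset S).2 h
  have ex1 : ∀ P : ℝ≥0 → Prop, (∀ᶠ t in 𝓝 (v y), P t) →
      ∃ c : F, c ≠ 0 ∧ v y < v (algebraMap F M c) ∧ P (v (algebraMap F M c)) := by
    intro P hP
    obtain ⟨u, hu, hu2⟩ := exists_Ico_subset_of_mem_nhds hP ⟨v y + 1, by simp⟩
    obtain ⟨c, hc1, hc2⟩ := hd _ _ hu
    refine ⟨c, ?_, hc1, hu2 ⟨hc1.le, hc2⟩⟩
    rintro rfl
    simp at hc1
  have ex2 : ∀ P : ℝ≥0 → Prop, (∀ᶠ t in 𝓝 (v y), P t) →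
      ∃ c : F, c ≠ 0 ∧ v (algebraMap F M c) < v y ∧ P (v (algebraMap F M c)) := by
    intro P hP
    obtain ⟨u, hu, hu2⟩ := exists_Ioc_subset_of_mem_nhds hP ⟨0, zero_lt_iff.2 hvy⟩
    obtain ⟨c, hc1, hc2⟩ := hd _ _ hu
    refine ⟨c, ?_, hc2, hu2 ⟨hc1, hc2.le⟩⟩
    rintro rfl
    simp at hc1
  obtain ⟨c1, hc1, hlt1, h1⟩ := ex1 _ key3
  obtain ⟨c2, hc2, hlt2, h2⟩ := ex2 _ h1
  have hc1' : algebraMap F M c1 ≠ 0 := by simpa using hc1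
  have hvc1' : v (algebraMap F M c1) ≠ 0 := by simpa using hc1
  have hcc : v (algebraMap F M (c2 / c1)) ≤ 1 := by
    rw [map_div₀, map_div₀]
    exact div_le_one_of_le₀ (hlt2.trans hlt1).le zero_le
  obtain ⟨c, hc⟩ := hA.exists_of_le_one hcc
  have hc0 : c ≠ 0 := by
    rintro rfl
    rw [map_zero] at hc
    exact div_ne_zero hc2 hc1 hc.symm
  have hinj : Function.Injective (algebraMap A F) := hA.hom_inj
  have htr : Transcendental A (y / algebraMap F M c1) := by
    intro halg
    have h1 : IsAlgebraic F (y / algebraMap F M c1) := halg.extendScalars hinj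
    apply hx
    have : x = y / algebraMap F M c1 * algebraMap F M c1 + algebraMap F M a := by
      rw [hy]; field_simp; ring
    rw [this]
    exact (h1.mul (isAlgebraic_algebraMap c1)).add (isAlgebraic_algebraMap a)
  refine ⟨Fin 2, Fin.cons (algebraMap F M c2 / y) (fun _ => y / algebraMap F M c1), _, ?_,
    ker_two _ _ htr c hc0 ?_, ?_⟩
  · intro i
    refine Fin.cases ?_ (fun j => ?_) i
    · rw [Fin.cons_zero]
      refine ⟨hF2 c2, ?_⟩
      rw [map_div₀]; exact div_le_one_of_le₀ hlt2.le zero_le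
    · rw [Fin.cons_succ]
      refine ⟨hF1 c1, ?_⟩
      rw [map_div₀]; exact div_le_one_of_le₀ hlt1.le zero_le
  · rw [IsScalarTower.algebraMap_apply A F M, hc, map_div₀]; field_simp
  · intro s hs
    rw [← Algebra.adjoin_range_eq_range_aeval, Fin.range_cons]
    have : Set.range (fun _ : Fin 1 => y / algebraMap F M c1) = {y / algebraMap F M c1} := by simp
    rw [this]
    exact h2 s hs c1 c2 hc1 hc2 rfl rfl
end
end
end Part8

section Part9
set_option linter.style.haveILetI false
set_option linter.unusedSectionVars false
set_option synthInstance.maxHeartbeats 800000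
set_option maxHeartbeats 400000
noncomputable section
open Polynomial NNReal Topology Filter

section
variable (V : Set ℝ≥0) (hmul : ∀ a ∈ V, ∀ b ∈ V, a * b ∈ V) (hinv : ∀ a ∈ V, a⁻¹ ∈ V)

include hmul hinv in
lemma V_zpow (hone : (1 : ℝ≥0) ∈ V) (a : ℝ≥0) (ha : a ∈ V) (k : ℤ) : a ^ k ∈ V := by
  have hp : ∀ n : ℕ, a ^ n ∈ V := by
    intro n
    induction n with
    | zero => simpa using hone
    | succ n ih => rw [pow_succ]; exact hmul _ ih _ ha
  cases k with
  | ofNat n => simpa using hp n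
  | negSucc n => rw [zpow_negSucc]; exact hinv _ (hp _)

include hmul hinv in
lemma V_dich (hex : ∃ a ∈ V, a ≠ 0 ∧ a < 1) :
    (∃ g ∈ V, g ≠ 0 ∧ g < 1 ∧ ∀ z ∈ V, z < 1 → z ≤ g) ∨ (∀ s < 1, ∃ z ∈ V, s < z ∧ z < 1) := by
  by_contra hcon
  push Not at hcon
  obtain ⟨h1, s, hs, h2⟩ := hcon
  set W := {z ∈ V | z < 1} with hW
  obtain ⟨a, haV, ha0, ha1⟩ := hex
  have hWb : ∀ z ∈ W, z ≤ s := fun z hz => by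
    by_contra h
    exact absurd hz.2 (not_lt.2 (h2 z hz.1 (not_le.1 h)))
  have hbdd : BddAbove W := ⟨s, hWb⟩
  set t := sSup W with ht
  have hat : a ≤ t := le_csSup hbdd ⟨haV, ha1⟩
  have ht0 : 0 < t := lt_of_lt_of_le (zero_lt_iff.2 ha0) hat
  have ht1 : t < 1 := lt_of_le_of_lt (csSup_le ⟨a, haV, ha1⟩ hWb) hs
  have hle : ∀ z ∈ W, z ≤ t := fun z hz => le_csSup hbdd hz
  have hnot : t ∉ W := by
    intro h
    obtain ⟨z, hz, hz1, hz2⟩ := h1 t h.1 ht0.ne' ht1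
    exact absurd (hle z ⟨hz, hz1⟩) (not_le.2 hz2)
  have htt : t * t < t := by
    calc t * t < t * 1 := by gcongr
      _ = t := mul_one t
  obtain ⟨c, hcW, hc⟩ := exists_lt_of_lt_csSup (show W.Nonempty from ⟨a, haV, ha1⟩) htt
  have hct : c < t := lt_of_le_of_ne (hle c hcW) (fun h => hnot (h ▸ hcW))
  obtain ⟨c', hcW', hc'⟩ := exists_lt_of_lt_csSup (show W.Nonempty from ⟨a, haV, ha1⟩) hct
  have hc0 : 0 < c' := lt_of_le_of_lt zero_le hc'
  have h3 : c * c'⁻¹ ≤ t := by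
    apply hle
    refine ⟨hmul _ hcW.1 _ (hinv _ hcW'.1), ?_⟩
    rw [← div_eq_mul_inv]
    exact (div_lt_one₀ hc0).2 hc'
  rw [← div_eq_mul_inv, div_le_iff₀ hc0] at h3
  have h4 : t * c' ≤ t * t := by gcongr; exact hle _ hcW'
  exact absurd (h3.trans h4) (not_le.2 hc)

include hmul hinv in
lemma V_discrete (hone : (1 : ℝ≥0) ∈ V) (g : ℝ≥0) (hg : g ∈ V) (hg0 : g ≠ 0) (hg1 : g < 1)
    (hmax : ∀ z ∈ V, z < 1 → z ≤ g) (z : ℝ≥0) (hz : z ∈ V) (hz0 : z ≠ 0) : ∃ k : ℤ, z = g ^ k := by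
  have h1 : 1 < g⁻¹ := (one_lt_inv₀ (zero_lt_iff.2 hg0)).2 hg1
  obtain ⟨k, hk1, hk2⟩ := exists_mem_Ico_zpow (zero_lt_iff.2 hz0) h1
  have hgk : g⁻¹ ^ k ≠ 0 := zpow_ne_zero _ (inv_ne_zero hg0)
  refine ⟨-k, ?_⟩
  rw [zpow_neg, ← inv_zpow]
  by_contra hne
  have hlt : g⁻¹ ^ k < z := lt_of_le_of_ne hk1 (Ne.symm hne)
  have h2 : g⁻¹ ^ k * z⁻¹ ≤ g := by
    apply hmax
    · exact hmul _ (V_zpow V hmul hinv hone _ (hinv _ hg) k) _ (hinv _ hz)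
    · rw [← div_eq_mul_inv]; exact (div_lt_one₀ (zero_lt_iff.2 hz0)).2 hlt
  rw [← div_eq_mul_inv, div_le_iff₀ (zero_lt_iff.2 hz0)] at h2
  rw [zpow_add_one₀ (inv_ne_zero hg0), ← div_eq_mul_inv, lt_div_iff₀ (zero_lt_iff.2 hg0), mul_comm] at hk2
  exact absurd h2 (not_le.2 hk2)

include hmul hinv in
lemma V_dense (hone : (1 : ℝ≥0) ∈ V) (hd : ∀ s < 1, ∃ z ∈ V, s < z ∧ z < 1) (lo hi : ℝ≥0)
    (h : lo < hi) : ∃ c ∈ V, lo < c ∧ c < hi := by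
  have hhi : 0 < hi := lt_of_le_of_lt zero_le h
  have hs : lo / hi < 1 := (div_lt_one₀ hhi).2 h
  obtain ⟨c, hcV, hc1, hc2⟩ := hd _ hs
  have hc0 : 0 < c := lt_of_le_of_lt zero_le hc1
  have h1 : 1 < c⁻¹ := (one_lt_inv₀ hc0).2 hc2
  obtain ⟨k, hk1, hk2⟩ := exists_mem_Ioc_zpow hhi h1
  refine ⟨c⁻¹ ^ k, V_zpow V hmul hinv hone _ (hinv _ hcV) k, ?_, hk1⟩
  rw [zpow_add_one₀ (inv_ne_zero hc0.ne'), ← div_eq_mul_inv, le_div_iff₀ hc0] at hk2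
  rw [div_lt_iff₀ hhi, mul_comm] at hc1
  exact lt_of_lt_of_le hc1 hk2
end

section
variable {A M : Type*} [Field M] {v : Valuation M ℝ≥0} [CommRing A] [Algebra A M]
variable {F : Type*} [Field F] [Algebra F M]

/-- value set of a subfield -/
def valSet (v : Valuation M ℝ≥0) (F' : IntermediateField F M) : Set ℝ≥0 := {t | ∃ z ∈ F', v z = t}

lemma valSet_mul (F' : IntermediateField F M) : ∀ a ∈ valSet v F', ∀ b ∈ valSet v F', a * b ∈ valSet v F' := by
  rintro _ ⟨z, hz, rfl⟩ _ ⟨w, hw, rfl⟩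
  exact ⟨z * w, mul_mem hz hw, map_mul v z w⟩
lemma valSet_inv (F' : IntermediateField F M) : ∀ a ∈ valSet v F', a⁻¹ ∈ valSet v F' := by
  rintro _ ⟨z, hz, rfl⟩
  exact ⟨z⁻¹, inv_mem hz, map_inv₀ v z⟩
lemma valSet_one (F' : IntermediateField F M) : 1 ∈ valSet v F' := ⟨1, one_mem _, map_one v⟩

lemma mem_valSet_bot {t : ℝ≥0} : t ∈ valSet v (⊥ : IntermediateField F M) ↔
    ∃ c : F, v (algebraMap F M c) = t := by
  constructor
  · rintro ⟨_, ⟨c, rfl⟩, h⟩; exact ⟨c, h⟩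
  · rintro ⟨c, h⟩; exact ⟨_, ⟨c, rfl⟩, h⟩

lemma root_val (n : ℕ) (hmin : ∀ p : F[X], p.natDegree < n → p.Splits) (t : ℝ≥0) (i : ℕ) (hi : i ≠ 0)
    (hin : i < n) (c : F) (h : t ^ i = v (algebraMap F M c)) : ∃ c', t = v (algebraMap F M c') := by
  have hs : (X ^ i - C c : F[X]).Splits := hmin _ (by rwa [natDegree_X_pow_sub_C])
  have hdeg : (X ^ i - C c : F[X]).degree ≠ 0 := by
    rw [degree_X_pow_sub_C (Nat.pos_of_ne_zero hi)]; exact_mod_cast hi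
  obtain ⟨r, hr⟩ := hs.exists_eval_eq_zero hdeg
  have hr' : r ^ i = c := by simpa [sub_eq_zero] using hr
  refine ⟨r, ?_⟩
  rw [← hr', map_pow, map_pow] at h
  exact pow_left_injective hi h

lemma term_le (n : ℕ) (y : M)
    (hy : ∀ i, i ≠ 0 → i < n → ∀ c : F, v y ^ i ≠ v (algebraMap F M c))
    (p : F[X]) (hp : p.natDegree < n) :
    (∀ j, v (algebraMap F M (p.coeff j) * y ^ j) ≤ v (aeval y p)) ∧
    ∃ j, j < n ∧ v (aeval y p) = v (algebraMap F M (p.coeff j) * y ^ j) := by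
  rw [aeval_eq_sum_range' hp]
  simp only [Algebra.smul_def]
  set f : ℕ → M := fun j => algebraMap F M (p.coeff j) * y ^ j with hf
  have hn : (Finset.range n).Nonempty := ⟨p.natDegree, Finset.mem_range.2 hp⟩
  have h0 : ∀ j, n ≤ j → f j = 0 := by
    intro j hj
    rw [hf]; dsimp only
    rw [coeff_eq_zero_of_natDegree_lt (lt_of_lt_of_le hp hj), map_zero, zero_mul]
  obtain ⟨j0, hj0, hmax⟩ := Finset.exists_max_image (Finset.range n) (fun j => v (f j)) hn
  have hmain : v (∑ j ∈ Finset.range n, f j) = v (f j0) := by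
    by_cases hz : v (f j0) = 0
    · have : ∀ j ∈ Finset.range n, f j = 0 := by
        intro j hj
        have := hmax j hj
        rw [hz] at this
        exact (map_eq_zero v).1 (le_antisymm this zero_le)
      rw [Finset.sum_eq_zero this, map_zero, hz]
    · apply Valuation.map_sum_eq_of_lt v hj0
      intro j hj
      rw [Finset.mem_sdiff, Finset.mem_singleton] at hj
      refine lt_of_le_of_ne (hmax j hj.1) fun heq => ?_
      have key : ∀ a b : ℕ, a < b → b < n → v (f a) = v (f b) → v (f b) ≠ 0 → False := by
        intro a b hab hbn hab' hb0
        have ha0 : v (f a) ≠ 0 := by rwa [hab']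
        simp only [hf, map_mul, map_pow] at hab' hb0 ha0
        have hya : v y ^ a ≠ 0 := right_ne_zero_of_mul ha0
        have hcb : v (algebraMap F M (p.coeff b)) ≠ 0 := left_ne_zero_of_mul hb0
        apply hy (b - a) (by omega) (by omega) (p.coeff a / p.coeff b)
        rw [map_div₀, map_div₀, eq_div_iff hcb]
        apply mul_right_cancel₀ hya
        rw [hab', ← Nat.sub_add_cancel hab.le, pow_add]
        rw [Nat.sub_add_cancel hab.le]; ring
      rcases lt_or_gt_of_ne hj.2 with h | h
      · exact key j j0 h (Finset.mem_range.1 hj0) heq hz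
      · exact key j0 j h (Finset.mem_range.1 hj.1) heq.symm (by rwa [heq])
  rw [hmain]
  refine ⟨fun j => ?_, j0, Finset.mem_range.1 hj0, rfl⟩
  by_cases hj : j < n
  · exact hmax j (Finset.mem_range.2 hj)
  · rw [show algebraMap F M (p.coeff j) * y ^ j = 0 from h0 j (not_lt.1 hj), map_zero]
    exact zero_le

/-- elements as polynomials in any generator -/
lemma repr_poly (n : ℕ) (hmin : ∀ p : F[X], p.natDegree < n → p.Splits)
    (F' : IntermediateField F M) (hfin : Module.finrank F F' = n) (hn : n ≠ 0) (y : M) (hy : y ∈ F')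
    (hyF : ∀ c : F, algebraMap F M c ≠ y) :
    (minpoly F y).natDegree = n ∧ IsIntegral F y ∧
    ∀ z ∈ F', ∃ p : F[X], p.natDegree < n ∧ aeval y p = z := by
  haveI : FiniteDimensional F F' := FiniteDimensional.of_finrank_pos (by omega)
  have hintg : IsIntegral F y := by
    have := (Algebra.IsIntegral.isIntegral (R := F) (⟨y, hy⟩ : F')).map F'.val
    exact this
  have hge : n ≤ (minpoly F y).natDegree := by
    by_contra h
    have hs := hmin _ (not_le.1 h)
    have h1 : (minpoly F y).degree = 1 := hs.degree_eq_one_of_irreducible (minpoly.irreducible hintg)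
    have := minpoly.mem_range_of_degree_eq_one F y h1
    obtain ⟨c, hc⟩ := this
    exact hyF c hc
  have hle : IntermediateField.adjoin F {y} ≤ F' := by
    rw [IntermediateField.adjoin_simple_le_iff]; exact hy
  have hfr := IntermediateField.adjoin.finrank hintg
  have heq : IntermediateField.adjoin F {y} = F' :=
    IntermediateField.eq_of_le_of_finrank_le hle (by rw [hfr, hfin]; exact hge)
  have hdeg : (minpoly F y).natDegree = n := by rw [← hfr, heq, hfin]
  refine ⟨hdeg, hintg, fun z hz => ?_⟩
  rw [← heq, ← IntermediateField.mem_toSubalgebra,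
    IntermediateField.adjoin_simple_toSubalgebra_of_isAlgebraic hintg.isAlgebraic,
    Algebra.adjoin_singleton_eq_range_aeval] at hz
  obtain ⟨p, rfl⟩ := hz
  refine ⟨p %ₘ minpoly F y, ?_, ?_⟩
  · rw [← hdeg]
    apply natDegree_modByMonic_lt _ (minpoly.monic hintg)
    intro h
    have := minpoly.natDegree_pos hintg
    rw [h] at this
    simp at this
  · exact aeval_modByMonic_eq_self_of_root (minpoly.aeval _ _)

lemma pow_n_val (n : ℕ) (hmin : ∀ p : F[X], p.natDegree < n → p.Splits)
    (F' : IntermediateField F M) (hfin : Module.finrank F F' = n) (hn : n ≠ 0) (y : M) (hy : y ∈ F') :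
    ∃ c : F, v y ^ n = v (algebraMap F M c) := by
  by_cases hyv : ∃ c : F, v y = v (algebraMap F M c)
  · obtain ⟨c, hc⟩ := hyv
    exact ⟨c ^ n, by rw [hc, map_pow, map_pow]⟩
  have hvy0 : v y ≠ 0 := fun h => hyv ⟨0, by rw [h]; simp⟩
  have hyi : ∀ i, i ≠ 0 → i < n → ∀ c : F, v y ^ i ≠ v (algebraMap F M c) :=
    fun i hi hin c h => hyv (root_val n hmin _ i hi hin c h)
  have hyF : ∀ c : F, algebraMap F M c ≠ y := by
    rintro c rfl; exact hyv ⟨c, rfl⟩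
  obtain ⟨hdeg, hintg, -⟩ := repr_poly n hmin F' hfin hn y hy hyF
  have hm := minpoly.monic hintg
  have h1 : aeval y (minpoly F y).eraseLead = - y ^ n := by
    have := minpoly.aeval F y
    rw [← eraseLead_add_C_mul_X_pow (minpoly F y), hm.leadingCoeff, hdeg] at this
    simp only [C_1, one_mul, map_add, map_pow, aeval_X] at this
    exact eq_neg_of_add_eq_zero_left this
  have h2 : (minpoly F y).eraseLead.natDegree < n := by
    have := eraseLead_natDegree_le (minpoly F y)
    omega
  obtain ⟨-, j, hj, hval⟩ := term_le n y hyi _ h2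
  rw [h1, Valuation.map_neg, map_pow, map_mul, map_pow] at hval
  have hj0 : j = 0 := by
    by_contra hj0
    apply hyi (n - j) (by omega) (by omega) ((minpoly F y).eraseLead.coeff j)
    apply mul_right_cancel₀ (pow_ne_zero j hvy0)
    rw [← hval, ← pow_add, Nat.sub_add_cancel hj.le]
  subst hj0
  exact ⟨_, by simpa using hval⟩

variable [IsDomain A] [Algebra A F] [IsScalarTower A F M]
  (hA : (v.comap (algebraMap F M)).Integers A)
include hA

lemma RepB_of_poly (B : Subalgebra A M) (y : M) (p : F[X])
    (h : ∀ j, algebraMap F M (p.coeff j) * y ^ j ∈ B) : RepB v B (aeval y p) := by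
  refine ⟨aeval y p, ?_, 1, B.one_mem, map_one v, mul_one _⟩
  rw [aeval_eq_sum_range]
  simp only [Algebra.smul_def]
  exact Subalgebra.sum_mem _ fun j _ => h j

lemma stepM_Calg (n : ℕ) (hmin : ∀ p : F[X], p.natDegree < n → p.Splits)
    (F' : IntermediateField F M) (hfin : Module.finrank F F' = n) (hn : n ≠ 0)
    (hnt : ∃ c : F, c ≠ 0 ∧ v (algebraMap F M c) < 1) (y : M) (hyF' : y ∈ F')
    (hyv : ∀ c : F, v y ≠ v (algebraMap F M c)) : StepM v A (F' : Set M) := by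
  have hV : ∀ w : M, (∀ c : F, v w ≠ v (algebraMap F M c)) →
    ∀ i, i ≠ 0 → i < n → ∀ c : F, v w ^ i ≠ v (algebraMap F M c) := by
    intro w hw i hi hin c h
    obtain ⟨c', hc'⟩ := root_val n hmin _ i hi hin c h
    exact hw c' hc'
  have hVF : ∀ w : M, (∀ c : F, v w ≠ v (algebraMap F M c)) → ∀ c : F, algebraMap F M c ≠ w := by
    rintro w hw c rfl; exact hw c rfl
  obtain ⟨c0, hc0, hc01⟩ := hnt
  refine stepM_one hA _ fun S hS => ?_
  rcases V_dich (valSet v F') (valSet_mul F') (valSet_inv F')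
    ⟨v (algebraMap F M c0), ⟨_, F'.algebraMap_mem c0, rfl⟩, by simpa using hc0, hc01⟩ with hd | hd
  · obtain ⟨_, ⟨g, hgF, rfl⟩, hg0, hg1, hmax⟩ := hd
    have hpow : ∀ z ∈ F', z ≠ 0 → ∃ k : ℤ, v z = v g ^ k := fun z hz hz0 =>
      V_discrete _ (valSet_mul F') (valSet_inv F') (valSet_one F') _ ⟨g, hgF, rfl⟩ hg0 hg1 hmax _
        ⟨z, hz, rfl⟩ (by simpa using hz0)
    have hgv : ∀ c : F, v g ≠ v (algebraMap F M c) := by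
      intro c hc
      obtain ⟨k, hk⟩ := hpow y hyF' (fun h => hyv 0 (by rw [h]; simp))
      apply hyv (c ^ k)
      rw [hk, hc, map_zpow₀, map_zpow₀]
    obtain ⟨-, -, hrep⟩ := repr_poly n hmin F' hfin hn g hgF (hVF g hgv)
    refine ⟨g, hgF, hg1.le, fun s hs => ?_⟩
    obtain ⟨p, hp, rfl⟩ := hrep s (hS s hs).1
    refine RepB_of_poly hA _ _ _ fun j => ?_
    refine Subalgebra.mul_mem _ (int_lift hA _ ?_) (Subalgebra.pow_mem _
      (Algebra.self_mem_adjoin_singleton A g) _)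
    by_cases hpj : p.coeff j = 0
    · rw [hpj]; simp
    have hjn : j < n := lt_of_le_of_lt (le_natDegree_of_ne_zero hpj) hp
    have h1 := ((term_le n g (hV g hgv) p hp).1 j).trans (hS _ hs).2
    obtain ⟨k, hk⟩ := hpow _ (F'.algebraMap_mem (p.coeff j)) (by simpa using hpj)
    have hg0' : 0 < v g := zero_lt_iff.2 hg0
    rw [map_mul, map_pow, hk, ← zpow_natCast, ← zpow_add₀ hg0] at h1
    have h2 : 0 ≤ k + j := by
      by_contra h
      exact absurd h1 (not_le.2 (one_lt_zpow_of_neg₀ hg0' hg1 (not_le.1 h)))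
    by_cases hk0 : 0 ≤ k
    · rw [hk]; exact zpow_le_one₀ hg0' hg1.le hk0
    · exfalso
      push Not at hk0
      obtain ⟨l, hl⟩ := Int.eq_ofNat_of_zero_le (a := -k) (by omega)
      apply hV g hgv l (by omega) (by omega) (p.coeff j)⁻¹
      rw [map_inv₀, map_inv₀, hk, ← zpow_neg, hl, zpow_natCast]
  · -- dense
    have hdF : ∀ s < 1, ∃ z ∈ valSet v (⊥ : IntermediateField F M), s < z ∧ z < 1 := by
      intro s hs
      have hc : Tendsto (fun t : ℝ≥0 => t ^ n) (𝓝 1) (𝓝 1) := by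
        have : Tendsto (fun t : ℝ≥0 => t ^ n) (𝓝 1) (𝓝 (1 ^ n)) := Continuous.tendsto (by fun_prop) _
        rwa [one_pow] at this
      obtain ⟨t, ht1, ht2⟩ := exists_Ioc_subset_of_mem_nhds (hc.eventually_const_lt hs) ⟨0, zero_lt_one⟩
      obtain ⟨_, ⟨z, hz, rfl⟩, hz1, hz2⟩ := hd t ht1
      obtain ⟨c, hc⟩ := pow_n_val (v := v) n hmin F' hfin hn z hz
      refine ⟨v z ^ n, mem_valSet_bot.2 ⟨c, hc.symm⟩, ht2 ⟨hz1, hz2.le⟩, pow_lt_one₀ zero_le hz2 hn⟩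
    have hd2 := V_dense _ (valSet_mul _) (valSet_inv _) (valSet_one _) hdF
    have hvy : v y ≠ 0 := by simpa using hyv 0
    obtain ⟨-, -, hrep⟩ := repr_poly n hmin F' hfin hn y hyF' (hVF y hyv)
    have key : ∀ s ∈ S, ∀ᶠ t in 𝓝 (v y), ∀ c1 : F, c1 ≠ 0 → v (algebraMap F M c1) = t →
        RepB v (Algebra.adjoin A {y / algebraMap F M c1}) s := by
      intro s hs
      obtain ⟨p, hp, rfl⟩ := hrep s (hS s hs).1
      have hev : ∀ᶠ t in 𝓝 (v y), ∀ j ∈ Finset.range n, v (algebraMap F M (p.coeff j)) * t ^ j ≤ 1 := by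
        rw [Filter.eventually_all_finset]
        intro j hj
        have h1 := ((term_le n y (hV y hyv) p hp).1 j).trans (hS _ hs).2
        rw [map_mul, map_pow] at h1
        by_cases hj0 : j = 0
        · subst hj0
          exact Eventually.of_forall fun t => by simpa using h1
        by_cases hpj : v (algebraMap F M (p.coeff j)) = 0
        · exact Eventually.of_forall fun t => by rw [hpj, zero_mul]; exact zero_le_one
        have hlt : v (algebraMap F M (p.coeff j)) * v y ^ j < 1 := by
          refine lt_of_le_of_ne h1 fun h => hV y hyv j hj0 (Finset.mem_range.1 hj) (p.coeff j)⁻¹ ?_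
          rw [map_inv₀, map_inv₀]
          exact eq_inv_of_mul_eq_one_right h
        have hc : Tendsto (fun t : ℝ≥0 => v (algebraMap F M (p.coeff j)) * t ^ j) (𝓝 (v y))
          (𝓝 (v (algebraMap F M (p.coeff j)) * v y ^ j)) :=
          (Continuous.tendsto (by fun_prop) _)
        exact (hc.eventually_lt_const hlt).mono fun t ht => ht.le
      filter_upwards [hev] with t ht
      rintro c1 hc1 rfl
      have hc1' : algebraMap F M c1 ≠ 0 := by simpa using hc1
      refine RepB_of_poly hA _ _ _ fun j => ?_
      have : algebraMap F M (p.coeff j) * y ^ j =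
          algebraMap F M (p.coeff j * c1 ^ j) * (y / algebraMap F M c1) ^ j := by
        rw [map_mul, map_pow, div_pow]; field_simp
      rw [this]
      refine Subalgebra.mul_mem _ (int_lift hA _ ?_) (Subalgebra.pow_mem _
        (Algebra.self_mem_adjoin_singleton A _) _)
      rw [map_mul, map_pow, map_mul, map_pow]
      by_cases hj : j < n
      · exact ht j (Finset.mem_range.2 hj)
      · rw [coeff_eq_zero_of_natDegree_lt (by omega), map_zero, map_zero, zero_mul]
        exact zero_le_one
    have key2 := (Filter.eventually_all_finset S).2 key
    obtain ⟨u, hu, hu2⟩ := exists_Ico_subset_of_mem_nhds key2 ⟨v y + 1, by simp⟩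
    obtain ⟨t, htV, ht1, ht2⟩ := hd2 _ _ hu
    obtain ⟨c, rfl⟩ := mem_valSet_bot.1 htV
    have hc : c ≠ 0 := by rintro rfl; simp at ht1
    refine ⟨y / algebraMap F M c, div_mem hyF' (F'.algebraMap_mem c), ?_, fun s hs =>
      hu2 ⟨ht1.le, ht2⟩ s hs c hc rfl⟩
    rw [map_div₀]; exact div_le_one_of_le₀ ht1.le zero_le
end
end
end Part9

section Part10
set_option linter.style.haveILetI false
set_option linter.unusedSectionVars false
set_option synthInstance.maxHeartbeats 800000
set_option maxHeartbeats 400000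
noncomputable section
open Polynomial NNReal Topology Filter

section
variable {A M : Type*} [Field M] {v : Valuation M ℝ≥0} [CommRing A] [Algebra A M]
variable {F : Type*} [Field F] [Algebra F M]

lemma splits_of_roots [IsAlgClosed M] (p : F[X])
    (h : ∀ z : M, p ≠ 0 → aeval z p = 0 → ∃ c, algebraMap F M c = z) : p.Splits := by
  by_cases hp : p = 0
  · rw [hp]; exact Splits.zero
  refine Splits.of_splits_map (algebraMap F M) (IsAlgClosed.splits _) ?_
  intro z hz
  rw [mem_roots (by simpa using hp), IsRoot, eval_map_algebraMap] at hz
  exact h z hp hz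

variable [IsDomain A] [Algebra A F] [IsScalarTower A F M]
  (hA : (v.comap (algebraMap F M)).Integers A)
include hA

lemma step_exists [IsAlgClosed M] (hnt : ∃ c : F, c ≠ 0 ∧ v (algebraMap F M c) < 1)
    (hne : ∃ x : M, ∀ c : F, algebraMap F M c ≠ x) :
    ∃ F' : IntermediateField F M, (∃ x ∈ F', ∀ c : F, algebraMap F M c ≠ x) ∧ StepM v A (F' : Set M) := by
  classical
  by_cases halg : ∃ x : M, IsIntegral F x ∧ ∀ c : F, algebraMap F M c ≠ x
  · have hex : ∃ n, ∃ x : M, (IsIntegral F x ∧ ∀ c : F, algebraMap F M c ≠ x) ∧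
        (minpoly F x).natDegree = n := by
      obtain ⟨x, hx⟩ := halg
      exact ⟨_, x, hx, rfl⟩
    obtain ⟨x, ⟨hintg, hx⟩, hdeg⟩ := Nat.find_spec hex
    set n := Nat.find hex with hn
    have hmin : ∀ p : F[X], p.natDegree < n → p.Splits := by
      intro p hp
      refine splits_of_roots (M := M) p fun z hp0 hz => ?_
      by_contra hcon
      push Not at hcon
      have hzint : IsIntegral F z := (IsAlgebraic.isIntegral ⟨p, hp0, hz⟩)
      have h1 : (minpoly F z).natDegree ≤ p.natDegree := natDegree_le_of_dvd (minpoly.dvd F z hz) hp0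
      exact Nat.find_min hex (lt_of_le_of_lt h1 hp) ⟨z, ⟨hzint, hcon⟩, rfl⟩
    have hn0 : n ≠ 0 := by rw [← hdeg]; exact (minpoly.natDegree_pos hintg).ne'
    set F' := IntermediateField.adjoin F {x} with hF'
    have hxF : x ∈ F' := IntermediateField.mem_adjoin_simple_self F x
    have hfin : Module.finrank F F' = n := by rw [IntermediateField.adjoin.finrank hintg, hdeg]
    refine ⟨F', ⟨x, hxF, hx⟩, ?_⟩
    by_cases hC : ∃ a : F, (∀ e : F, v (x - algebraMap F M a) ≤ v (x - algebraMap F M e)) ∧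
      ∀ c : F, v (x - algebraMap F M a) ≠ v (algebraMap F M c)
    · obtain ⟨a, -, ha⟩ := hC
      exact stepM_Calg hA n hmin F' hfin hn0 hnt _ (sub_mem hxF (F'.algebraMap_mem a)) ha
    · refine stepM_AB hA x _ (fun a c => div_mem (sub_mem hxF (F'.algebraMap_mem a))
        (F'.algebraMap_mem c)) hx hC fun s hs => ?_
      obtain ⟨-, -, hrep⟩ := repr_poly n hmin F' hfin hn0 x hxF hx
      obtain ⟨p, hp, hps⟩ := hrep s hs
      exact ⟨p, 1, hmin p hp, Splits.one, by simp, by simp [hps]⟩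
  · push Not at halg
    obtain ⟨x, hx⟩ := hne
    have hspl : ∀ p : F[X], p.Splits := by
      intro p
      refine splits_of_roots (M := M) p fun z hp0 hz => ?_
      exact halg z (IsAlgebraic.isIntegral ⟨p, hp0, hz⟩)
    have htr : Transcendental F x := by
      intro h
      obtain ⟨c, hc⟩ := halg x h.isIntegral
      exact hx c hc
    set F' := IntermediateField.adjoin F {x} with hF'
    have hxF : x ∈ F' := IntermediateField.mem_adjoin_simple_self F x
    have hrep : ∀ s ∈ (F' : Set M), ∃ p q : F[X], p.Splits ∧ q.Splits ∧ aeval x q ≠ 0 ∧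
      s * aeval x q = aeval x p := by
      intro s hs
      obtain ⟨p, q, hpq⟩ := (IntermediateField.mem_adjoin_simple_iff F s).1 hs
      by_cases hq : aeval x q = 0
      · refine ⟨0, 1, hspl _, hspl _, by simp, ?_⟩
        rw [hpq, hq]; simp
      · exact ⟨p, q, hspl _, hspl _, hq, by rw [hpq]; field_simp⟩
    have hm1 : ∀ a c : F, (x - algebraMap F M a) / algebraMap F M c ∈ (F' : Set M) :=
      fun a c => div_mem (sub_mem hxF (F'.algebraMap_mem a)) (F'.algebraMap_mem c)
    refine ⟨F', ⟨x, hxF, hx⟩, ?_⟩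
    by_cases hC : ∃ a : F, (∀ e : F, v (x - algebraMap F M a) ≤ v (x - algebraMap F M e)) ∧
      ∀ c : F, v (x - algebraMap F M a) ≠ v (algebraMap F M c)
    · obtain ⟨a, -, ha⟩ := hC
      refine stepM_C hA x a _ htr ha ?_ (hm1 a)
        (fun c => div_mem (F'.algebraMap_mem c) (sub_mem hxF (F'.algebraMap_mem a))) ?_ hrep
      · intro m c hm h
        obtain ⟨c', hc'⟩ := root_val (m + 1) (fun p _ => hspl p) _ m hm (by omega) c h
        exact ha c' hc'
      · have hdF : ∀ s < 1, ∃ z ∈ valSet v (⊥ : IntermediateField F M), s < z ∧ z < 1 := by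
          intro s hs
          obtain ⟨c, hc0, hc1⟩ := hnt
          have hvc : 0 < v (algebraMap F M c) := by
            rw [zero_lt_iff]; simpa using hc0
          obtain ⟨m, hm⟩ := _root_.exists_pow_lt_of_lt_one hvc hs
          have hm0 : m ≠ 0 := by
            rintro rfl
            rw [pow_zero] at hm
            exact absurd (hm.trans hc1) (lt_irrefl _)
          have hdeg : (X ^ m - C c : F[X]).degree ≠ 0 := by
            rw [degree_X_pow_sub_C (Nat.pos_of_ne_zero hm0)]; exact_mod_cast hm0
          obtain ⟨r, hr⟩ := (hspl _).exists_eval_eq_zero hdeg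
          have hr' : r ^ m = c := by simpa [sub_eq_zero] using hr
          rw [← hr', map_pow, map_pow] at hm hc1
          refine ⟨_, mem_valSet_bot.2 ⟨r, rfl⟩, lt_of_pow_lt_pow_left₀ m zero_le hm, ?_⟩
          by_contra hcon
          exact absurd hc1 (not_lt.2 (one_le_pow₀ (not_lt.1 hcon)))
        intro lo hi hlh
        obtain ⟨t, ht, h1, h2⟩ := V_dense _ (valSet_mul _) (valSet_inv _) (valSet_one _) hdF lo hi hlh
        obtain ⟨c, rfl⟩ := mem_valSet_bot.1 ht
        exact ⟨c, h1, h2⟩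
    · exact stepM_AB hA x _ hm1 hx hC hrep
end
end
end Part10

section Part11
set_option linter.style.haveILetI false
set_option linter.unusedSectionVars false
set_option synthInstance.maxHeartbeats 800000
set_option maxHeartbeats 400000
noncomputable section
open NNReal

section
variable {R M : Type*} [CommRing R] [Field M] [Algebra R M] (v : Valuation M ℝ≥0)
  (hR : ∀ r : R, v (algebraMap R M r) ≤ 1)

/-- integers of a subfield -/
def Oi (F : Subfield M) (hF : ∀ r : R, algebraMap R M r ∈ F) : Subalgebra R M where
  carrier := {x | x ∈ F ∧ v x ≤ 1}
  mul_mem' := fun {a b} ha hb => ⟨mul_mem ha.1 hb.1, by rw [map_mul]; exact mul_le_one' ha.2 hb.2⟩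
  add_mem' := fun {a b} ha hb => ⟨add_mem ha.1 hb.1, (v.map_add a b).trans (max_le ha.2 hb.2)⟩
  algebraMap_mem' := fun r => ⟨hF r, hR r⟩

variable {v hR}

lemma Oi_mono {F F' : Subfield M} {hF : ∀ r : R, algebraMap R M r ∈ F}
    {hF' : ∀ r : R, algebraMap R M r ∈ F'} (h : F ≤ F') : Oi v hR F hF ≤ Oi v hR F' hF' :=
  fun _ hx => ⟨h hx.1, hx.2⟩

instance (F : Subfield M) (hF : ∀ r : R, algebraMap R M r ∈ F) : Algebra (Oi v hR F hF) F :=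
  RingHom.toAlgebra
    { toFun := fun x => ⟨x.1, x.2.1⟩
      map_one' := rfl
      map_mul' := fun _ _ => rfl
      map_zero' := rfl
      map_add' := fun _ _ => rfl }

instance (F : Subfield M) (hF : ∀ r : R, algebraMap R M r ∈ F) :
    IsScalarTower (Oi v hR F hF) F M := IsScalarTower.of_algebraMap_eq fun _ => rfl

lemma Oi_integers (F : Subfield M) (hF : ∀ r : R, algebraMap R M r ∈ F) :
    (v.comap (algebraMap F M)).Integers (Oi v hR F hF) where
  hom_inj := fun a b h => Subtype.ext (congrArg (fun z : F => (z : M)) h)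
  map_le_one := fun x => x.2.2
  exists_of_le_one := fun {r} hr => ⟨⟨r.1, r.2, hr⟩, rfl⟩

instance (F : Subfield M) (hF : ∀ r : R, algebraMap R M r ∈ F) : ValuationRing (Oi v hR F hF) :=
  ValuationRing.of_integers _ (Oi_integers F hF)

lemma Oi_isUnit (F : Subfield M) (hF : ∀ r : R, algebraMap R M r ∈ F) (x : Oi v hR F hF) :
    IsUnit x ↔ v (x : M) = 1 :=
  (Oi_integers F hF).isUnit_iff_valuation_eq_one

theorem Oi_step {F F' : Subfield M} (hF : ∀ r : R, algebraMap R M r ∈ F)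
    (hF' : ∀ r : R, algebraMap R M r ∈ F') (h : F ≤ F')
    (hinj : Function.Injective (algebraMap R M))
    (hstep : StepM v (Oi v hR F hF) (F' : Set M)) :
    CIc (Subalgebra.inclusion (Oi_mono h : Oi v hR F hF ≤ Oi v hR F' hF')) ∧
    (TFc R (Oi v hR F hF) → TFc R (Oi v hR F' hF')) := by
  classical
  set A := Oi v hR F hF with hAdef
  set D := Oi v hR F' hF' with hDdef
  have hle : A ≤ D := Oi_mono h
  letI : Algebra A D := (Subalgebra.inclusion hle).toRingHom.toAlgebra
  have hAD : ∀ a : A, ((algebraMap A D a : D) : M) = a := fun a => rfl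
  haveI : IsScalarTower R A D := IsScalarTower.of_algebraMap_eq fun r => rfl
  haveI : IsScalarTower A D M := IsScalarTower.of_algebraMap_eq fun r => rfl
  have hADinj : Function.Injective (algebraMap A D) := Subalgebra.inclusion_injective hle
  have hflat : ∀ B : Subalgebra A D, Module.Flat A B := by
    intro B
    rw [Module.Flat.flat_iff_torsion_eq_bot_of_isBezout, ← Submodule.isTorsionFree_iff_torsion_eq_bot]
    haveI : FaithfulSMul A B := by
      rw [faithfulSMul_iff_algebraMap_injective]
      intro a b hab
      exact hADinj (congrArg (fun z : B => (z : D)) hab)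
    infer_instance
  haveI : Module.Flat A D := by
    rw [Module.Flat.flat_iff_torsion_eq_bot_of_isBezout, ← Submodule.isTorsionFree_iff_torsion_eq_bot]
    haveI : FaithfulSMul A D := (faithfulSMul_iff_algebraMap_injective A D).2 hADinj
    infer_instance
  haveI : IsLocalHom (algebraMap A D) := ⟨fun a ha => (Oi_isUnit F hF a).2 ((Oi_isUnit F' hF' _).1 ha)⟩
  haveI : Module.FaithfullyFlat A D := Module.FaithfullyFlat.of_flat_of_isLocalHom
  have hH : StepHyp A D := by
    intro S
    obtain ⟨σ, y, g, hy, hg, hrep⟩ := hstep (S.image (fun z : D => (z : M))) (by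
      intro s hs
      obtain ⟨z, -, rfl⟩ := Finset.mem_image.1 hs
      exact ⟨z.2.1, z.2.2⟩)
    let y' : σ → D := fun i => ⟨y i, (hy i).1, (hy i).2⟩
    have hy' : ∀ p : MvPolynomial σ A, ((MvPolynomial.aeval y' p : D) : M) = MvPolynomial.aeval y p := by
      intro p
      have : (IsScalarTower.toAlgHom A D M).comp (MvPolynomial.aeval y' : MvPolynomial σ A →ₐ[A] D) =
          MvPolynomial.aeval y := by
        apply MvPolynomial.algHom_ext
        intro i
        rw [AlgHom.comp_apply, MvPolynomial.aeval_X, MvPolynomial.aeval_X]; rfl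
      exact DFunLike.congr_fun this p
    refine ⟨σ, y', g, ?_, ?_⟩
    · rw [← hg]
      ext p
      rw [RingHom.mem_ker, RingHom.mem_ker, ← hy']
      exact Subtype.ext_iff
    · intro s hs
      obtain ⟨_, ⟨p, rfl⟩, _, ⟨q, rfl⟩, hq1, hq2⟩ := hrep s (Finset.mem_image_of_mem _ hs)
      refine ⟨p, q, ?_, ?_⟩
      · rw [Oi_isUnit, hy']; exact hq1
      · apply Subtype.ext
        change (s : M) * ((MvPolynomial.aeval y' q : D) : M) = ((MvPolynomial.aeval y' p : D) : M)
        rw [hy', hy']; exact hq2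
  have hinj' : Function.Injective (algebraMap R D) := by
    intro a b hab
    exact hinj (congrArg (fun z : D => (z : M)) hab)
  exact step_abs hflat hinj' hH

lemma CIc_incl {A B D : Subalgebra R M} (h1 : A ≤ B) (h2 : B ≤ D)
    (c1 : CIc (Subalgebra.inclusion h1)) (c2 : CIc (Subalgebra.inclusion h2)) (h3 : A ≤ D) :
    CIc (Subalgebra.inclusion h3) := by
  have e : (Subalgebra.inclusion h2).comp (Subalgebra.inclusion h1) = Subalgebra.inclusion h3 :=
    AlgHom.ext fun _ => rfl
  rw [← e]
  exact c1.comp c2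

theorem Oi_top [IsAlgClosed M] (hinj : Function.Injective (algebraMap R M))
    (F0 : Subfield M) (hF0 : ∀ r : R, algebraMap R M r ∈ F0)
    (hnt : ∃ c ∈ F0, c ≠ 0 ∧ v c < 1) :
    CIc (Subalgebra.inclusion (Oi_mono le_top :
      Oi v hR F0 hF0 ≤ Oi v hR ⊤ (fun _ => Subfield.mem_top _))) ∧
    (TFc R (Oi v hR F0 hF0) → TFc R (Oi v hR ⊤ (fun _ => Subfield.mem_top _))) := by
  let Z : Set (Subfield M) := {F | ∃ h : F0 ≤ F,
    CIc (Subalgebra.inclusion (Oi_mono h : Oi v hR F0 hF0 ≤ Oi v hR F (fun r => h (hF0 r)))) ∧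
    (TFc R (Oi v hR F0 hF0) → TFc R (Oi v hR F (fun r => h (hF0 r))))}
  have hF0Z : F0 ∈ Z := by
    refine ⟨le_rfl, ?_, fun h => h⟩
    intro f hf h
    have : (Subalgebra.inclusion (Oi_mono le_rfl : Oi v hR F0 hF0 ≤ Oi v hR F0 hF0) : _ → _) = _root_.id := rfl
    rwa [this, MvPolynomial.rename_id_apply] at h
  obtain ⟨F, -, hmax⟩ := zorn_le_nonempty₀ Z (by
    intro c hcZ hc F1 hF1
    have hne : c.Nonempty := ⟨F1, hF1⟩
    have hle : F0 ≤ sSup c := (hcZ hF1).1.trans (le_sSup hF1)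
    have hfin : ∀ S : Finset (Oi v hR (sSup c) (fun r => hle (hF0 r))), ∃ F ∈ c, ∀ s ∈ S, (s : M) ∈ F := by
      classical
      intro S
      induction S using Finset.induction_on with
      | empty => exact ⟨F1, hF1, by simp⟩
      | insert a S ha ih =>
        obtain ⟨F2, hF2, h2⟩ := ih
        obtain ⟨F3, hF3, h3⟩ := (Subfield.mem_sSup_of_directedOn hne hc.directedOn).1 a.2.1
        obtain ⟨F4, hF4, h24, h34⟩ := hc.directedOn _ hF2 _ hF3
        refine ⟨F4, hF4, fun s hs => ?_⟩
        rcases Finset.mem_insert.1 hs with rfl | hs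
        · exact h34 h3
        · exact h24 (h2 s hs)
    refine ⟨sSup c, ⟨hle, ?_, fun hT => ?_⟩, fun F hF => le_sSup hF⟩
    · refine CIc_of_union _ fun S => ?_
      obtain ⟨F, hFc, hFS⟩ := hfin S
      obtain ⟨hF, h1, h2⟩ := hcZ hFc
      refine ⟨Oi v hR F (fun r => hF (hF0 r)), inferInstance, inferInstance,
        Subalgebra.inclusion (Oi_mono (le_sSup hFc)), Subalgebra.inclusion (Oi_mono hF), rfl,
        Subalgebra.inclusion_injective _, ?_, h1⟩
      intro s hs
      exact ⟨⟨s.1, hFS s hs, s.2.2⟩, rfl⟩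
    · refine TFc_of_union fun S => ?_
      obtain ⟨F, hFc, hFS⟩ := hfin S
      obtain ⟨hF, h1, h2⟩ := hcZ hFc
      refine ⟨Oi v hR F (fun r => hF (hF0 r)), inferInstance, inferInstance,
        Subalgebra.inclusion (Oi_mono (le_sSup hFc)),
        Subalgebra.inclusion_injective _, ?_, h2 hT⟩
      intro s hs
      exact ⟨⟨s.1, hFS s hs, s.2.2⟩, rfl⟩) F0 hF0Z
  obtain ⟨⟨hF, h1, h2⟩, hmax⟩ := hmax
  have htop : F = ⊤ := by
    by_contra hne
    have hex : ∃ x : M, ∀ c : F, algebraMap F M c ≠ x := by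
      by_contra hcon
      push Not at hcon
      apply hne
      rw [eq_top_iff]
      intro x _
      obtain ⟨c, hc⟩ := hcon x
      rw [← hc]; exact c.2
    obtain ⟨c, hcF, hc0, hc1⟩ := hnt
    obtain ⟨F', ⟨x, hxF', hx⟩, hstep⟩ := step_exists (Oi_integers (v := v) (hR := hR) F (fun r => hF (hF0 r)))
      ⟨⟨c, hF hcF⟩, fun h => hc0 (congrArg Subtype.val h), hc1⟩ hex
    have hFF' : F ≤ F'.toSubfield := fun z hz => F'.algebraMap_mem ⟨z, hz⟩
    obtain ⟨h3, h4⟩ := Oi_step (F' := F'.toSubfield) (fun r => hF (hF0 r)) (fun r => hFF' (hF (hF0 r)))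
      hFF' hinj hstep
    have hmem : F'.toSubfield ∈ Z := ⟨hF.trans hFF', CIc_incl _ _ h1 h3 _, fun h => h4 (h2 h)⟩
    exact hx ⟨x, hmax hmem hFF' hxF'⟩ rfl
  subst htop
  exact ⟨h1, h2⟩
end
end
end Part11

section Part12
set_option linter.style.haveILetI false
set_option linter.unusedSectionVars false
set_option synthInstance.maxHeartbeats 800000
set_option maxHeartbeats 400000
noncomputable section
open NNReal

lemma CIc_equiv {R A B : Type*} [CommRing R] [CommRing A] [CommRing B] [Algebra R A] [Algebra R B]
    (e : A ≃ₐ[R] B) : CIc (e : A →ₐ[R] B) := by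
  intro f hf h
  have := kerP_sq_rename (e.symm : B →ₐ[R] A) h
  rw [MvPolynomial.rename_rename] at this
  have h2 : ((e.symm : B →ₐ[R] A) : B → A) ∘ ((e : A →ₐ[R] B) : A → B) = _root_.id := by
    funext x; simp
  rwa [h2, MvPolynomial.rename_id_apply] at this

lemma TFc_of_bijective {R B : Type*} [CommRing R] [IsDomain R] [CommRing B] [Algebra R B]
    (h : Function.Bijective (algebraMap R B)) : TFc R B := by
  refine TFc_of_TFh (fun r hr b hb => ?_) ?_
  · obtain ⟨s, rfl⟩ := h.2 b
    rw [← map_mul, ← map_zero (algebraMap R B)] at hb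
    rw [(mul_eq_zero.1 (h.1 hb)).resolve_left hr, map_zero]
  let e : R ≃ₐ[R] B := AlgEquiv.ofBijective (Algebra.ofId R B) h
  haveI : Algebra.FormallySmooth R B := Algebra.FormallySmooth.of_equiv e
  intro r _ t _
  exact Subsingleton.elim _ _

theorem TFc_integers {R O K L M : Type*} [CommRing R] [CommRing O] [Algebra R O] [Field K] [Field L]
    [Algebra K L] [Field M] [IsAlgClosed M] (v : Valuation M ℝ≥0) (f : L →+* M)
    (i : R →+* K) (j : O →+* L) (hij : ∀ r, j (algebraMap R O r) = algebraMap K L (i r))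
    (hi : Function.Injective i) (hj : Function.Injective j)
    (hi1 : ∀ k : K, v (f (algebraMap K L k)) ≤ 1 ↔ ∃ r, i r = k)
    (hj1 : ∀ l : L, v (f l) ≤ 1 ↔ ∃ r, j r = l)
    (hnt : ∃ k : K, k ≠ 0 ∧ v (f (algebraMap K L k)) < 1) : TFc R O := by
  haveI : IsDomain R := hi.isDomain i
  letI : Algebra R M := (f.comp (j.comp (algebraMap R O))).toAlgebra
  have hRM : ∀ r : R, algebraMap R M r = f (algebraMap K L (i r)) := fun r => by
    rw [← hij]; rfl
  have hR : ∀ r : R, v (algebraMap R M r) ≤ 1 := fun r => by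
    rw [hRM]; exact (hi1 _).2 ⟨r, rfl⟩
  have hinj : Function.Injective (algebraMap R M) := by
    intro a b hab
    rw [hRM, hRM] at hab
    exact hi ((algebraMap K L).injective (f.injective hab))
  let FK : Subfield M := (f.comp (algebraMap K L)).fieldRange
  let FL : Subfield M := f.fieldRange
  have hFK : ∀ r : R, algebraMap R M r ∈ FK := fun r => ⟨i r, (hRM r).symm⟩
  have hFL : ∀ r : R, algebraMap R M r ∈ FL := fun r => ⟨_, (hRM r).symm⟩
  obtain ⟨k, hk0, hk1⟩ := hnt
  have h1 := (Oi_top (v := v) (hR := hR) hinj FK hFK ⟨_, ⟨k, rfl⟩, by simpa using hk0, hk1⟩).2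
  have h2 := (Oi_top (v := v) (hR := hR) hinj FL hFL ⟨_, ⟨algebraMap K L k, rfl⟩, by simpa using hk0, hk1⟩).1
  have h3 : TFc R (Oi v hR FK hFK) := by
    refine TFc_of_bijective ⟨fun a b hab => hinj (congrArg Subtype.val hab), ?_⟩
    rintro ⟨_, ⟨k, rfl⟩, hk⟩
    obtain ⟨r, rfl⟩ := (hi1 k).1 hk
    exact ⟨r, Subtype.ext (hRM r)⟩
  have h4 : TFc R (Oi v hR FL hFL) := TFc_of_CIc h2 (h1 h3)
  let φ : O →ₐ[R] Oi v hR FL hFL :=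
    { toFun := fun x => ⟨f (j x), ⟨j x, rfl⟩, (hj1 _).2 ⟨x, rfl⟩⟩
      map_one' := Subtype.ext (by simp)
      map_zero' := Subtype.ext (by simp)
      map_mul' := fun a b => Subtype.ext (by simp)
      map_add' := fun a b => Subtype.ext (by simp)
      commutes' := fun r => Subtype.ext rfl }
  have hφ : Function.Bijective φ := by
    refine ⟨fun a b hab => hj (f.injective (congrArg Subtype.val hab)), ?_⟩
    rintro ⟨_, ⟨l, rfl⟩, hl⟩
    obtain ⟨r, rfl⟩ := (hj1 l).1 hl
    exact ⟨r, rfl⟩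
  exact TFc_of_CIc (CIc_equiv (AlgEquiv.ofBijective φ hφ)) h4
end
end Part12

section Part13
set_option linter.style.haveILetI false
set_option linter.unusedSectionVars false
set_option synthInstance.maxHeartbeats 800000
set_option maxHeartbeats 400000
noncomputable section
open NNReal

lemma exists_closure_normed (E : Type*) [NontriviallyNormedField E] [IsUltrametricDist E] [CompleteSpace E] :
    ∃ v : Valuation (AlgebraicClosure E) ℝ≥0, ∀ x : E, (v (algebraMap E _ x) : ℝ) = ‖x‖ := by
  let N := spectralMulAlgNorm (K := E) (L := AlgebraicClosure E)
  refine ⟨⟨⟨⟨fun x => ⟨N x, apply_nonneg N x⟩, ?_⟩, ?_, ?_⟩, ?_⟩, ?_⟩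
  · exact Subtype.ext (map_zero N)
  · exact Subtype.ext (map_one N)
  · exact fun x y => Subtype.ext (map_mul N x y)
  · intro x y
    exact isNonarchimedean_spectralNorm (K := E) (L := AlgebraicClosure E) x y
  · intro x
    exact spectralNorm_extends x

lemma exists_closure.{u} (L : Type u) [Field L] (w : AbsoluteValue L ℝ) (hw : IsNonarchimedean w)
    (hnt : ∃ x : L, 1 < w x) :
    ∃ (M : Type u) (_ : Field M) (_ : IsAlgClosed M) (v : Valuation M ℝ≥0) (f : L →+* M),
      ∀ x, (v (f x) : ℝ) = w x := by
  let E := w.Completion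
  have hnorm : ∀ x : L, ‖((WithAbs.toAbs w x : WithAbs w) : E)‖ = w x := by
    intro x
    rw [UniformSpace.Completion.norm_coe]; rfl
  letI : NontriviallyNormedField E :=
    { (inferInstance : NormedField E) with
      non_trivial := by
        obtain ⟨x, hx⟩ := hnt
        exact ⟨((WithAbs.toAbs w x : WithAbs w) : E), by rw [← hnorm] at hx; exact hx⟩ }
  haveI : IsUltrametricDist E := by
    refine IsUltrametricDist.isUltrametricDist_of_forall_norm_natCast_le_one fun n => ?_
    have : ((n : ℕ) : E) = ((WithAbs.toAbs w (n : L) : WithAbs w) : E) := by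
      have h1 := map_natCast ((UniformSpace.Completion.coeRingHom : WithAbs w →+* E).comp
        (WithAbs.equiv w).symm.toRingHom) n
      exact h1.symm
    rw [this]
    refine le_of_eq_of_le (hnorm _) ?_
    exact hw.apply_natCast_le_one_of_isNonarchimedean
  obtain ⟨v, hv⟩ := exists_closure_normed E
  refine ⟨AlgebraicClosure E, inferInstance, inferInstance, v,
    (algebraMap E (AlgebraicClosure E)).comp ((UniformSpace.Completion.coeRingHom : WithAbs w →+* E).comp
        (WithAbs.equiv w).symm.toRingHom), fun x => ?_⟩
  exact (hv _).trans (hnorm x)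

/-- the absolute value attached to an additive valuation -/
lemma exists_abs (L : Type*) [Field L] (vL : AddValuation L (WithTop ℝ)) :
    ∃ w : AbsoluteValue L ℝ, IsNonarchimedean w ∧ (∀ x, w x ≤ 1 ↔ 0 ≤ vL x) := by
  classical
  let e : WithTop ℝ → ℝ := fun t => t.recTopCoe 0 (fun r => Real.exp (-r))
  have etop : e ⊤ = 0 := rfl
  have ecoe : ∀ r : ℝ, e r = Real.exp (-r) := fun r => rfl
  have enonneg : ∀ t, 0 ≤ e t := by
    intro t
    induction t with
    | top => exact le_rfl
    | coe r => exact (Real.exp_pos _).le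
  have eadd : ∀ s t, e (s + t) = e s * e t := by
    intro s t
    induction s with
    | top => rw [top_add, etop, zero_mul]
    | coe s =>
      induction t with
      | top => rw [add_top, etop, mul_zero]
      | coe t => rw [← WithTop.coe_add, ecoe, ecoe, ecoe, ← Real.exp_add]; congr 1; ring
  have eanti : ∀ s t, s ≤ t → e t ≤ e s := by
    intro s t h
    induction t with
    | top => rw [etop]; exact enonneg s
    | coe t =>
      induction s with
      | top => exact absurd h (by simp)
      | coe s =>
        rw [ecoe, ecoe]
        exact Real.exp_le_exp.2 (neg_le_neg (WithTop.coe_le_coe.1 h))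
  have hna : ∀ x y : L, e (vL (x + y)) ≤ max (e (vL x)) (e (vL y)) := by
    intro x y
    have h := eanti _ _ (vL.map_add x y)
    rcases min_choice (vL x) (vL y) with h1 | h1 <;> rw [h1] at h
    · exact h.trans (le_max_left _ _)
    · exact h.trans (le_max_right _ _)
  refine ⟨⟨⟨fun x => e (vL x), ?_⟩, ?_, ?_, ?_⟩, hna, ?_⟩
  · intro x y
    change e (vL (x * y)) = _
    rw [vL.map_mul, eadd]
  · intro x; exact enonneg _
  · intro x
    constructor
    · intro h
      change e (vL x) = 0 at h
      rw [← vL.top_iff]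
      cases hx : vL x with
      | top => rfl
      | coe r => rw [hx, ecoe] at h; exact absurd h (Real.exp_pos _).ne'
    · rintro rfl
      change e (vL 0) = 0
      rw [vL.map_zero, etop]
  · intro x y
    exact (hna x y).trans (max_le_add_of_nonneg (enonneg _) (enonneg _))
  · intro x
    change e (vL x) ≤ 1 ↔ _
    cases hx : vL x with
    | top => rw [etop]; simp
    | coe r =>
      rw [ecoe, Real.exp_le_one_iff, neg_nonpos]
      exact_mod_cast Iff.rfl
end
end Part13

section Part14
set_option linter.style.haveILetI false
set_option linter.unusedSectionVars false
set_option synthInstance.maxHeartbeats 800000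
set_option maxHeartbeats 400000
noncomputable section
open Algebra TensorProduct

lemma H1_iff {R O K L : Type*} [CommRing R] [IsDomain R] [CommRing O] [Field K] [Field L] [Algebra R O]
    [Algebra R K] [Algebra R L] [Algebra K L] [Algebra O L] [IsScalarTower R K L] [IsScalarTower R O L]
    [IsFractionRing R K] [IsLocalization (Algebra.algebraMapSubmonoid O (nonZeroDivisors R)) L]
    (hTF : TFh R O) : Subsingleton (H1Cotangent R O) ↔ Subsingleton (H1Cotangent K L) := by
  have hloc := H1Cotangent.isLocalizedModule R (T := L) (Algebra.algebraMapSubmonoid O (nonZeroDivisors R))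
  haveI : FormallyEtale R K := Algebra.FormallyEtale.of_isLocalization (Rₘ := K) (nonZeroDivisors R)
  have h12 : Subsingleton (H1Cotangent R L) ↔ Subsingleton (H1Cotangent K L) := by
    constructor
    · intro h
      refine ⟨fun a b => ?_⟩
      have key : ∀ a : H1Cotangent K L, a = 0 := by
        intro a
        obtain ⟨c, rfl⟩ := (H1Cotangent.exact_map_δ R K L a).1 (Subsingleton.elim _ _)
        rw [Subsingleton.elim c 0, map_zero]
      rw [key a, key b]
    · intro h
      refine ⟨fun a b => ?_⟩
      have key : ∀ a : H1Cotangent R L, a = 0 := by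
        intro a
        obtain ⟨c, rfl⟩ := (H1Cotangent.exact_liftBaseChange_map_of_flat R K L a).1 (Subsingleton.elim _ _)
        rw [Subsingleton.elim c 0, map_zero]
      rw [key a, key b]
  rw [← h12]
  constructor
  · intro h
    refine ⟨fun a b => ?_⟩
    have key : ∀ a : H1Cotangent R L, a = 0 := by
      intro t
      obtain ⟨⟨t0, s⟩, hs⟩ := IsLocalizedModule.surj (Algebra.algebraMapSubmonoid O (nonZeroDivisors R)) (H1Cotangent.map R R O L) t
      rw [Subsingleton.elim t0 0, map_zero] at hs
      have hs' : algebraMap O L s.1 • t = 0 := by rw [algebraMap_smul]; exact hs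
      have hu := IsLocalization.map_units L s
      exact (hu.smul_eq_zero).1 hs'
    rw [key a, key b]
  · intro h
    refine ⟨fun a b => ?_⟩
    have key : ∀ a : H1Cotangent R O, a = 0 := by
      intro t
      obtain ⟨⟨_, r, hr, rfl⟩, hc⟩ := (IsLocalizedModule.eq_zero_iff (Algebra.algebraMapSubmonoid O (nonZeroDivisors R))
        (H1Cotangent.map R R O L)).1 (Subsingleton.elim (H1Cotangent.map R R O L t) 0)
      exact hTF r (nonZeroDivisors.ne_zero hr) t hc
    rw [key a, key b]
end
end Part14

section Part15
set_option linter.style.haveILetI false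
set_option linter.unusedSectionVars false
set_option synthInstance.maxHeartbeats 800000
set_option maxHeartbeats 400000
noncomputable section
open Algebra

lemma exists_big {K : Type*} [Field K] (vK : AddValuation K (WithTop ℝ)) (hnt : vK.IsNontrivial) :
    ∃ k : K, k ≠ 0 ∧ 0 < vK k := by
  obtain ⟨x, hx, hv⟩ := hnt
  rcases lt_or_gt_of_ne hv with h | h
  · refine ⟨x⁻¹, inv_ne_zero hx, ?_⟩
    have h1 : vK x + vK x⁻¹ = 0 := by rw [← vK.map_mul, mul_inv_cancel₀ hx, vK.map_one]
    by_contra hc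
    rw [not_lt] at hc
    have h2 : vK x + vK x⁻¹ < 0 := by
      calc vK x + vK x⁻¹ ≤ vK x + 0 := by gcongr
        _ < 0 := by rwa [add_zero]
    exact absurd h1 h2.ne
  · exact ⟨x, hx, h⟩

lemma unitBall_frac {K : Type*} [Field K] (vK : AddValuation K (WithTop ℝ)) (x : K) :
    0 ≤ vK x ∨ 0 ≤ vK x⁻¹ := by
  by_cases hx : x = 0
  · left; rw [hx, vK.map_zero]; exact le_top
  by_contra hc
  push Not at hc
  have h1 : vK x + vK x⁻¹ = 0 := by rw [← vK.map_mul, mul_inv_cancel₀ hx, vK.map_one]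
  have h2 : vK x + vK x⁻¹ < 0 := by
    calc vK x + vK x⁻¹ ≤ vK x + 0 := by gcongr; exact hc.2.le
      _ < 0 := by rw [add_zero]; exact hc.1
  exact absurd h1 h2.ne

lemma pow_clears {L : Type*} [Field L] (vL : AddValuation L (WithTop ℝ)) (p x : L) (hp : 0 < vL p) :
    ∃ n : ℕ, 0 ≤ vL (p ^ n * x) := by
  cases hpv : vL p with
  | top =>
    refine ⟨1, ?_⟩
    rw [pow_one, vL.map_mul, hpv, top_add]; exact le_top
  | coe r =>
    cases hx : vL x with
    | top => exact ⟨0, by rw [vL.map_mul, hx, add_top]; exact le_top⟩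
    | coe s =>
      rw [hpv] at hp
      have hr : 0 < r := by exact_mod_cast hp
      obtain ⟨n, hn⟩ := exists_nat_ge (-s / r)
      refine ⟨n, ?_⟩
      rw [vL.map_mul, vL.map_pow, hpv, hx]
      rw [div_le_iff₀ hr] at hn
      have : (0 : ℝ) ≤ n • r + s := by rw [nsmul_eq_mul]; linarith
      exact_mod_cast this

theorem first_conj {K L : Type*} [Field K] [Field L] [Algebra K L]
    (vK : AddValuation K (WithTop ℝ)) (vL : AddValuation L (WithTop ℝ))
    (hnt : vK.IsNontrivial)
    (hext : ∀ x : K, vL (algebraMap K L x) = vK x)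
    [Algebra vK.unitBall vL.unitBall]
    (hcomp : ∀ x : vK.unitBall,
      (algebraMap vK.unitBall vL.unitBall x : L) = algebraMap K L (x : K)) :
    Subsingleton (Algebra.H1Cotangent vK.unitBall vL.unitBall) ↔
      Subsingleton (Algebra.H1Cotangent K L) := by
  obtain ⟨p, hp0, hp⟩ := exists_big vK hnt
  have hmemK : ∀ x : K, x ∈ vK.unitBall ↔ 0 ≤ vK x := fun x => Iff.rfl
  have hmemL : ∀ x : L, x ∈ vL.unitBall ↔ 0 ≤ vL x := fun x => Iff.rfl
  have hpL : 0 < vL (algebraMap K L p) := by rw [hext]; exact hp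
  have hpL0 : algebraMap K L p ≠ 0 := by simpa using hp0
  have hTF : TFc vK.unitBall vL.unitBall := by
    obtain ⟨w, hw, hw1⟩ := exists_abs L vL
    have hwlt : w (algebraMap K L p) < 1 := by
      by_contra hc
      rw [not_lt] at hc
      have h1 : w (algebraMap K L p)⁻¹ ≤ 1 := by
        rw [map_inv₀]; exact inv_le_one_of_one_le₀ hc
      rw [hw1] at h1
      have h2 : vL (algebraMap K L p) + vL (algebraMap K L p)⁻¹ = 0 := by
        rw [← vL.map_mul, mul_inv_cancel₀ hpL0, vL.map_one]
      have h3 : 0 < vL (algebraMap K L p) + vL (algebraMap K L p)⁻¹ :=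
        add_pos_of_pos_of_nonneg hpL h1
      exact absurd h2 h3.ne'
    obtain ⟨M, _, _, v, f, hv⟩ := exists_closure L w hw ⟨(algebraMap K L p)⁻¹, by
      rw [map_inv₀]
      exact (one_lt_inv₀ (w.pos hpL0)).2 hwlt⟩
    have hv1 : ∀ x, v (f x) ≤ 1 ↔ 0 ≤ vL x := by
      intro x
      rw [← hw1, ← hv]; exact_mod_cast Iff.rfl
    refine TFc_integers v f vK.unitBall.subtype vL.unitBall.subtype hcomp
      Subtype.val_injective Subtype.val_injective ?_ ?_ ⟨p, hp0, ?_⟩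
    · intro k
      rw [hv1, hext]
      exact ⟨fun h => ⟨⟨k, h⟩, rfl⟩, fun ⟨r, hr⟩ => hr ▸ r.2⟩
    · intro l
      rw [hv1]
      exact ⟨fun h => ⟨⟨l, h⟩, rfl⟩, fun ⟨r, hr⟩ => hr ▸ r.2⟩
    · have : (v (f (algebraMap K L p)) : ℝ) < 1 := by rw [hv]; exact hwlt
      exact_mod_cast this
  have hTFh := TFh_of_TFc hTF
  haveI : IsScalarTower vK.unitBall vL.unitBall L := IsScalarTower.of_algebraMap_eq (fun r => by
    rw [IsScalarTower.algebraMap_apply vK.unitBall K L]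
    exact (hcomp r).symm)
  have hinj : Function.Injective (algebraMap vK.unitBall vL.unitBall) := by
    intro a b hab
    have := congrArg (fun z : vL.unitBall => (z : L)) hab
    simp only [hcomp] at this
    exact Subtype.ext ((algebraMap K L).injective this)
  haveI : IsFractionRing vK.unitBall K := by
    refine IsFractionRing.of_field vK.unitBall K (fun z => ?_)
    rcases unitBall_frac vK z with h | h
    · exact ⟨⟨z, h⟩, 1, by rw [map_one, div_one]; rfl⟩
    · refine ⟨1, ⟨z⁻¹, h⟩, ?_⟩
      rw [map_one, one_div]
      exact (inv_inv z).symm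
  haveI : IsLocalization (Algebra.algebraMapSubmonoid vL.unitBall (nonZeroDivisors vK.unitBall)) L := by
    refine ⟨?_, ?_, ?_⟩
    · rintro ⟨_, r, hr, rfl⟩
      have hr0 : r ≠ 0 := nonZeroDivisors.ne_zero hr
      refine IsUnit.mk0 _ ?_
      have h1 : algebraMap vL.unitBall L (algebraMap vK.unitBall vL.unitBall r) =
          algebraMap K L (r : K) := hcomp r
      change algebraMap vL.unitBall L (algebraMap vK.unitBall vL.unitBall r) ≠ 0
      rw [h1]
      intro h2
      apply hr0
      apply Subtype.ext
      simpa using h2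
    · intro z
      obtain ⟨n, hn⟩ := pow_clears vL (algebraMap K L p) z hpL
      have hq : (⟨p, hp.le⟩ : vK.unitBall) ≠ 0 := fun h => hp0 (congrArg Subtype.val h)
      refine ⟨(⟨_, hn⟩, ⟨algebraMap vK.unitBall vL.unitBall (⟨p, hp.le⟩ ^ n), _,
        pow_mem (mem_nonZeroDivisors_of_ne_zero hq) n, rfl⟩), ?_⟩
      change z * (algebraMap vK.unitBall vL.unitBall (⟨p, hp.le⟩ ^ n) : L) =
        algebraMap K L p ^ n * z
      rw [hcomp, mul_comm]
      simp
    · intro a b hab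
      exact ⟨1, by rw [Subtype.ext hab]⟩
  exact H1_iff hTFh
end
end Part15

section Part16
set_option linter.style.haveILetI false
set_option linter.unusedSectionVars false
set_option synthInstance.maxHeartbeats 800000
set_option maxHeartbeats 400000
noncomputable section
open Algebra MvPolynomial

lemma H1_sub_iff {R B : Type*} [CommRing R] [CommRing B] [Algebra R B] :
    Subsingleton (H1Cotangent R B) ↔
    ∀ f ∈ kerP R B, (∀ i, aeval (_root_.id : B → B) (pderiv i f) = 0) → f ∈ kerP R B ^ 2 := by
  let E := (Generators.self R B).toExtension
  constructor
  · intro h f hf hd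
    let t : E.H1Cotangent := ⟨Extension.Cotangent.mk (P := E) ⟨f, hf⟩, (mem_h1_iff ⟨f, hf⟩).2 hd⟩
    have ht : t = 0 := @Subsingleton.elim _ h t 0
    have := congrArg E.h1Cotangentι ht
    exact (Extension.Cotangent.mk_eq_zero_iff (P := E) ⟨f, hf⟩).1 this
  · intro h
    refine subsingleton_of_forall_eq 0 fun t => ?_
    change E.H1Cotangent at t
    apply E.h1Cotangentι_injective
    obtain ⟨f, hf⟩ := Extension.Cotangent.mk_surjective (E.h1Cotangentι t)
    rw [map_zero, ← hf, Extension.Cotangent.mk_eq_zero_iff]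
    refine h f.1 f.2 ((mem_h1_iff f).1 ?_)
    rw [hf]
    exact t.2

lemma sep_imp_H1 {K L : Type*} [Field K] [Field L] [Algebra K L]
    (h : IsSeparableFieldExtension K L) : Subsingleton (H1Cotangent K L) := by
  rw [H1_sub_iff]
  intro f hf hd
  let M := IntermediateField.adjoin K (f.vars : Set L)
  obtain ⟨T, hT, hsep⟩ : IsSeparablyGenerated K M := h f.vars
  haveI : FormallySmooth K M := by
    have : Algebra.IsSeparable (IntermediateField.adjoin K (Set.range ((↑) : T → M))) M := by
      convert! hsep <;> simp
    exact .of_algebraicIndependent_of_isSeparable hT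
  have h1 := H1_sub_iff.1 (FormallySmooth.subsingleton_h1Cotangent (R := K) (A := M))
  obtain ⟨f1, hf1⟩ := exists_rename_eq M.val f (by
    intro x hx
    exact ⟨⟨x, IntermediateField.subset_adjoin K _ hx⟩, rfl⟩)
  rw [← hf1]
  apply kerP_sq_rename
  apply h1
  · apply M.val.injective
    have : aeval (_root_.id : L → L) f = 0 := hf
    rw [← hf1, mem_kerP_rename] at this
    rw [map_zero]; exact this
  · intro i
    apply M.val.injective
    have hMi : Function.Injective (M.val : M → L) := Subtype.val_injective
    have := hd (M.val i)
    rw [← hf1, pderiv_rename hMi, mem_kerP_rename] at this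
    rw [map_zero]; exact this

lemma exists_derivation {K : Type*} [Field K] (p : ℕ) [Fact p.Prime] [CharP K p] (a : K)
    (ha : ∀ b : K, b ^ p ≠ a) : ∃ D : Derivation ℤ K K, D a ≠ 0 := by
  obtain ⟨F, -, hF⟩ := zorn_le_nonempty₀ {F : Subfield K | (∀ b, b ^ p ∈ F) ∧ a ∉ F} (by
    intro c hc hch F hFc
    have hdir : DirectedOn (· ≤ ·) c := hch.directedOn
    refine ⟨sSup c, ⟨fun b => ?_, ?_⟩, fun z hz => le_sSup hz⟩
    · exact (le_sSup hFc) ((hc hFc).1 b)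
    · rw [Subfield.mem_sSup_of_directedOn ⟨F, hFc⟩ hdir]
      rintro ⟨s, hs, has⟩
      exact (hc hs).2 has) (frobenius K p).fieldRange
      ⟨fun b => ⟨b, rfl⟩, fun ⟨b, hb⟩ => ha b hb⟩
  obtain ⟨⟨hFp, haF⟩, hmax⟩ := hF
  have hp : p.Prime := Fact.out
  have hmin : ∀ x : K, x ∉ F → minpoly F x = Polynomial.X ^ p - Polynomial.C (⟨x ^ p, hFp x⟩ : F) := by
    intro x hx
    symm
    apply minpoly.eq_of_irreducible_of_monic
    · apply X_pow_sub_C_irreducible_of_prime hp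
      intro b hb
      have h1 : (b : K) ^ p = x ^ p := congrArg Subtype.val hb
      have h2 : (b : K) = x := frobenius_inj K p h1
      exact hx (h2 ▸ b.2)
    · simp only [map_sub, map_pow, Polynomial.aeval_X, Polynomial.aeval_C]
      exact sub_self _
    · exact Polynomial.monic_X_pow_sub_C _ hp.ne_zero
  have hintg : ∀ x : K, IsIntegral F x := by
    intro x
    by_cases hx : x ∈ F
    · exact isIntegral_algebraMap (R := F) (x := ⟨x, hx⟩)
    · exact minpoly.ne_zero_iff.1 (by rw [hmin x hx]; exact (Polynomial.monic_X_pow_sub_C _ hp.ne_zero).ne_zero)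
  have hfr : ∀ x : K, x ∉ F → Module.finrank F (IntermediateField.adjoin F {x}) = p := by
    intro x hx
    rw [IntermediateField.adjoin.finrank (hintg x), hmin x hx, Polynomial.natDegree_X_pow_sub_C]
  have hgen : IntermediateField.adjoin F {a} = ⊤ := by
    rw [_root_.eq_top_iff]
    intro x _
    by_cases hx : x ∈ F
    · exact (IntermediateField.adjoin F {a}).algebraMap_mem ⟨x, hx⟩
    have hax : a ∈ IntermediateField.adjoin F {x} := by
      by_contra hc
      have hle : F ≤ (IntermediateField.adjoin F {x}).toSubfield := fun y hy =>
        (IntermediateField.adjoin F {x}).algebraMap_mem ⟨y, hy⟩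
      have := hmax (y := (IntermediateField.adjoin F {x}).toSubfield) ⟨fun b => hle (hFp b), hc⟩ hle
      exact hx (this (IntermediateField.mem_adjoin_simple_self F x))
    haveI : FiniteDimensional F (IntermediateField.adjoin F {x}) :=
      IntermediateField.adjoin.finiteDimensional (hintg x)
    have := IntermediateField.eq_of_le_of_finrank_eq
      (IntermediateField.adjoin_simple_le_iff.2 hax) (by rw [hfr x hx, hfr a haF])
    rw [this]
    exact IntermediateField.mem_adjoin_simple_self F x
  have hadj : Algebra.adjoin F {a} = ⊤ := by
    rw [← IntermediateField.adjoin_simple_toSubalgebra_of_isAlgebraic (hintg a).isAlgebraic, hgen]; rfl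
  by_contra! hD
  have hsub : Subsingleton (Derivation F K K) := by
    refine subsingleton_of_forall_eq 0 fun D => ?_
    ext x
    have : Set.EqOn D (0 : Derivation F K K) {a} := by
      rintro _ rfl
      exact hD (D.restrictScalars ℤ)
    exact Derivation.eqOn_adjoin this (by rw [hadj]; trivial)
  have hΩ : Subsingleton (Ω[K⁄F]) := by
    have : Subsingleton (Module.Dual K (Ω[K⁄F])) :=
      (KaehlerDifferential.linearMapEquivDerivation F K).toEquiv.subsingleton
    refine subsingleton_of_forall_eq 0 fun y => ?_
    rw [← Module.forall_dual_apply_eq_zero_iff K]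
    intro f
    rw [Subsingleton.elim f 0]; rfl
  haveI : FormallyUnramified F K := ⟨hΩ⟩
  haveI : FiniteDimensional F K := by
    have := IntermediateField.adjoin.finiteDimensional (hintg a)
    rw [hgen] at this
    exact Module.Finite.equiv (IntermediateField.topEquiv (F := F) (E := K)).toLinearEquiv
  have hsep : Algebra.IsSeparable F K := FormallyUnramified.isSeparable F K
  have h1 := Algebra.IsSeparable.isSeparable F a
  have h2 : minpoly F a = _ := hmin a haF
  rw [IsSeparable, h2, Polynomial.Separable] at h1
  have h3 : (p : F) = 0 := Subtype.ext (by simp)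
  rw [Polynomial.derivative_sub, Polynomial.derivative_X_pow, h3] at h1
  simp only [map_zero, zero_mul, Polynomial.derivative_C, sub_zero, isCoprime_zero_right] at h1
  have := Polynomial.natDegree_eq_zero_of_isUnit h1
  rw [Polynomial.natDegree_X_pow_sub_C] at this
  exact hp.ne_zero this

end
end Part16

section Part17
set_option linter.style.haveILetI false
set_option linter.unusedSectionVars false
set_option synthInstance.maxHeartbeats 800000
set_option maxHeartbeats 400000
noncomputable section
open Algebra MvPolynomial

/-- ring homomorphism to the dual numbers attached to a derivation -/
def dualHom {K L : Type*} [Field K] [Field L] [Algebra K L] (D : Derivation ℤ K K) :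
    K →+* TrivSqZeroExt L L where
  toFun a := TrivSqZeroExt.inl (algebraMap K L a) + TrivSqZeroExt.inr (algebraMap K L (D a))
  map_one' := by ext <;> simp
  map_zero' := by ext <;> simp
  map_add' a b := by ext <;> simp [Algebra.smul_def]
  map_mul' a b := by
    ext
    · simp
    · simp only [Derivation.leibniz, smul_eq_mul, map_add, map_mul, TrivSqZeroExt.snd_add,
        TrivSqZeroExt.snd_mul, TrivSqZeroExt.snd_inl, TrivSqZeroExt.snd_inr,
        TrivSqZeroExt.fst_add, TrivSqZeroExt.fst_inl, TrivSqZeroExt.fst_inr,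
        MulOpposite.smul_eq_mul_unop, MulOpposite.unop_op]
      ring

lemma snd_eval_sq {K L : Type*} [Field K] [Field L] [Algebra K L] (D : Derivation ℤ K K)
    {f : MvPolynomial L K} (hf : f ∈ kerP K L ^ 2) :
    eval₂Hom (dualHom (L := L) D) (TrivSqZeroExt.inl : L → TrivSqZeroExt L L) f = 0 := by
  set φ := eval₂Hom (dualHom (L := L) D) (TrivSqZeroExt.inl : L → TrivSqZeroExt L L) with hφ
  have h1 : ∀ g ∈ kerP K L, (φ g).fst = 0 := by
    intro g hg
    have h2 : (TrivSqZeroExt.fstHom ℤ L L).toRingHom.comp φ =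
        (aeval (R := K) (_root_.id : L → L)).toRingHom := by
      apply MvPolynomial.ringHom_ext
      · intro r
        simp [hφ, dualHom]
      · intro i
        simp [hφ]
    have h3 := congrArg (fun ψ => ψ g) h2
    have hg' : aeval (R := K) (_root_.id : L → L) g = 0 := hg
    exact h3.trans hg'
  rw [pow_two] at hf
  have hle : kerP K L * kerP K L ≤ RingHom.ker φ := by
    rw [Ideal.mul_le]
    intro g hg h hh
    rw [RingHom.mem_ker, map_mul]
    ext
    · simp [h1 g hg]
    · simp [h1 g hg, h1 h hh]
  exact hle hf

lemma lin_indep_pow {K L : Type*} [Field K] [Field L] [Algebra K L]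
    (h : Subsingleton (H1Cotangent K L)) (p : ℕ) [Fact p.Prime] [CharP K p] (s : Finset L) :
    LinearIndepOn K _root_.id (s : Set L) → ∀ a : L → K, ∑ x ∈ s, a x • x ^ p = 0 →
      ∀ x ∈ s, a x = 0 := by
  classical
  have hp : p.Prime := Fact.out
  haveI : CharP L p := charP_of_injective_algebraMap (algebraMap K L).injective p
  induction s using Finset.strongInduction with
  | H s ih =>
  intro hs a ha
  by_contra! hc
  obtain ⟨x0, hx0, hax⟩ := hc
  let b : L → K := fun x => (a x0)⁻¹ * a x
  have hb0 : b x0 = 1 := inv_mul_cancel₀ hax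
  have hb : ∑ x ∈ s, b x • x ^ p = 0 := by
    simp only [b, mul_smul, ← Finset.smul_sum, ha, smul_zero]
  let f : MvPolynomial L K := ∑ x ∈ s, C (b x) * X x ^ p
  have hf : f ∈ kerP K L ^ 2 := by
    apply H1_sub_iff.1 h
    · change aeval (_root_.id : L → L) f = 0
      rw [← hb]
      simp [f, Algebra.smul_def]
    · intro i
      simp [f, Derivation.leibniz_pow]
  have hD : ∀ D : Derivation ℤ K K, ∀ x ∈ s, D (b x) = 0 := by
    intro D
    have h1 := congrArg TrivSqZeroExt.snd (snd_eval_sq D hf)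
    have h2 : ∑ x ∈ s, D (b x) • x ^ p = 0 := by
      rw [TrivSqZeroExt.snd_zero] at h1
      rw [← h1]
      simp only [f, map_sum, map_mul, map_pow, coe_eval₂Hom, eval₂_C, eval₂_X, dualHom]
      have hsum : ∀ F : L → TrivSqZeroExt L L, (∑ x ∈ s, F x).snd = ∑ x ∈ s, (F x).snd := fun F =>
        map_sum (TrivSqZeroExt.sndHom L L) F s
      rw [hsum]
      refine Finset.sum_congr rfl fun x hx => ?_
      rw [TrivSqZeroExt.inl_pow]
      simp [Algebra.smul_def, mul_comm]
      exact Or.inl rfl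
    rw [← Finset.add_sum_erase s _ hx0, hb0, Derivation.map_one_eq_zero, zero_smul, zero_add] at h2
    have h3 := ih (s.erase x0) (Finset.erase_ssubset hx0)
      (hs.mono (by exact_mod_cast Finset.erase_subset _ _)) (fun x => D (b x)) h2
    intro x hx
    by_cases hxx : x = x0
    · rw [hxx, hb0, Derivation.map_one_eq_zero]
    · exact h3 x (Finset.mem_erase.2 ⟨hxx, hx⟩)
  have hc : ∀ x ∈ s, ∃ c : K, c ^ p = b x := by
    intro x hx
    by_contra! hn
    obtain ⟨D, hD1⟩ := exists_derivation p (b x) hn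
    exact hD1 (hD D x hx)
  choose! c hcb using hc
  have h5 : (∑ x ∈ s, c x • x) ^ p = 0 := by
    rw [sum_pow_char, ← hb]
    refine Finset.sum_congr rfl fun x hx => ?_
    rw [smul_pow, hcb x hx]
  have h6 : ∑ x ∈ s, c x • x = 0 := pow_eq_zero_iff hp.ne_zero |>.1 h5
  have h7 := (linearIndepOn_finset_iff.1 hs) c h6 x0 hx0
  have h8 := hcb x0 hx0
  rw [h7, hb0, zero_pow hp.ne_zero] at h8
  exact zero_ne_one h8

lemma H1_imp_sep {K L : Type*} [Field K] [Field L] [Algebra K L]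
    (h : Subsingleton (H1Cotangent K L)) : IsSeparableFieldExtension K L := by
  intro S
  haveI : Algebra.EssFiniteType K (IntermediateField.adjoin K (S : Set L)) := by
    rw [IntermediateField.essFiniteType_iff]
    exact ⟨S, rfl⟩
  suffices H : ∃ s : Finset (IntermediateField.adjoin K (S : Set L)),
      IsTranscendenceBasis K ((↑) : s → IntermediateField.adjoin K (S : Set L)) ∧
      Algebra.IsSeparable (IntermediateField.adjoin K
        (s : Set (IntermediateField.adjoin K (S : Set L)))) (IntermediateField.adjoin K (S : Set L)) by
    obtain ⟨s, hs, hsep⟩ := H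
    exact ⟨s, hs.1, hsep⟩
  obtain _ | ⟨p, hp, hpk⟩ := CharP.exists' K
  · exact exists_isTranscendenceBasis_and_isSeparable_of_perfectField _ _
  haveI : ExpChar K p := .prime hp.out
  refine exists_isTranscendenceBasis_and_isSeparable_of_linearIndepOn_pow_of_essFiniteType
    p hp.out fun s hs => ?_
  classical
  let M := IntermediateField.adjoin K (S : Set L)
  rw [linearIndepOn_finset_iff]
  intro g hg x hx
  have hinj : Function.Injective (M.val : M → L) := Subtype.val_injective
  let s' : Finset L := s.map ⟨M.val, hinj⟩
  have hs' : LinearIndepOn K _root_.id (s' : Set L) := by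
    rw [linearIndepOn_finset_iff] at hs ⊢
    intro g' hg' y hy
    obtain ⟨y', hy', rfl⟩ := Finset.mem_map.1 hy
    refine hs (fun m => g' (M.val m)) ?_ y' hy'
    apply hinj
    rw [map_zero, ← hg', Finset.sum_map, map_sum]
    rfl
  have hgx : ∀ m : M, Function.extend (M.val : M → L) g 0 (M.val m) = g m := fun m =>
    hinj.extend_apply g 0 m
  have := lin_indep_pow h p s' hs' (Function.extend (M.val : M → L) g 0) (by
    rw [Finset.sum_map]
    have h1 := congrArg M.val hg
    rw [map_zero, map_sum] at h1
    rw [← h1]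
    refine Finset.sum_congr rfl fun m _ => ?_
    change Function.extend (M.val : M → L) g 0 (M.val m) • (M.val m) ^ p = _
    rw [hgx]
    rfl) (M.val x) (Finset.mem_map.2 ⟨x, hx, rfl⟩)
  rwa [hgx] at this

end
end Part17

/-- Let `(K, v_K)` be a field with a non-trivial real-valued valuation and
`(L, v_L)` a field extension with a real-valued valuation extending `v_K`, with rings of integers
`K°`, `L°`.  Then `H₁(𝕃_{L°/K°}) = 0` iff `H₁(𝕃_{L/K}) = 0`, and the latter holds precisely when
`L` is a separable field extension of `K`. -/
theorem h1Cotangent_integers_eq_zero_iff_separable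
    {K L : Type*} [Field K] [Field L] [Algebra K L]
    (vK : AddValuation K (WithTop ℝ)) (vL : AddValuation L (WithTop ℝ))
    (hnt : vK.IsNontrivial)
    (hext : ∀ x : K, vL (algebraMap K L x) = vK x)
    [Algebra vK.unitBall vL.unitBall]
    (hcomp : ∀ x : vK.unitBall,
      (algebraMap vK.unitBall vL.unitBall x : L) = algebraMap K L (x : K)) :
    (Subsingleton (Algebra.H1Cotangent vK.unitBall vL.unitBall) ↔
      Subsingleton (Algebra.H1Cotangent K L)) ∧
    (Subsingleton (Algebra.H1Cotangent K L) ↔ IsSeparableFieldExtension K L) := by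
  exact ⟨first_conj vK vL hnt hext hcomp, H1_imp_sep, sep_imp_H1⟩
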